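/- arXiv:math/0410052 — 2 statements merged into one kernel-verified Lean document; each statement's English description precedes it below -/
import Mathlib

section
/- Let S be a Polish space, c : S × S → [0,∞) satisfy condition (★), (Ω, 𝒜, P) a probability space, ℳ a sub-σ-algebra of 𝒜, and X an S-valued random variable with ∫ c(x, x₀) dP_X(x) < ∞ for some x₀ ∈ S. Assume there exists a random variable U uniformly distributed on [0,1] and independent of σ(X) ∨ ℳ. Then there exists a σ(U) ∨ σ(X) ∨ ℳ-measurable random variable X* : Ω → S, independent of ℳ and with the same law as X, such that E[c(X, X*)] = τ_c(ℳ, X). -/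
open MeasureTheory ProbabilityTheory ENNReal Set

noncomputable section

/-- The `μ`-completion of the σ-algebra `m`. -/
def muCompletion {α : Type*} (m : MeasurableSpace α) (μ : @Measure α m) : MeasurableSpace α :=
  letI := m
  inferInstanceAs (MeasurableSpace (MeasureTheory.NullMeasurableSpace α μ))

/-- The universal completion of a σ-algebra: the intersection of the `μ`-completions
over all finite nonnegative measures `μ`. -/
def univCompletion {α : Type*} (m : MeasurableSpace α) : MeasurableSpace α :=
  ⨅ (μ : @Measure α m) (_ : @IsFiniteMeasure α m μ), muCompletion m μ

/-- `Lip_c`: bounded continuous functions `u : S → ℝ` with `|u x - u y| ≤ c x y`. -/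
def LipC {S : Type*} [TopologicalSpace S] (c : S → S → ℝ) : Set (S → ℝ) :=
  {u | Continuous u ∧ (∃ M, ∀ x, |u x| ≤ M) ∧ ∀ x y, |u x - u y| ≤ c x y}

/-- Condition (★): `c x y = sup_{u ∈ Lip_c} |u x - u y|` for all `x, y`. -/
def StarCond {S : Type*} [TopologicalSpace S] (c : S → S → ℝ) : Prop :=
  ∀ x y, c x y = sSup {r : ℝ | ∃ u ∈ LipC c, r = |u x - u y|}

/-- `D(μ,ν)`: couplings of `μ` and `ν`, i.e. probability measures on `S × S`
with first margin `μ` and second margin `ν`. -/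
def Couplings {S : Type*} [MeasurableSpace S] (μ ν : Measure S) : Set (Measure (S × S)) :=
  {π | IsProbabilityMeasure π ∧ π.map Prod.fst = μ ∧ π.map Prod.snd = ν}

/-- The Kantorovich–Rubinštein functional `KR_c(μ,ν)`. -/
def KR {S : Type*} [MeasurableSpace S] (c : S → S → ℝ) (μ ν : Measure S) : ℝ≥0∞ :=
  ⨅ π ∈ Couplings μ ν, ∫⁻ p, ENNReal.ofReal (c p.1 p.2) ∂π

/-- The dual functional `ℓ_c(μ,ν) = sup_{f ∈ Lip_c} |∫ f dμ - ∫ f dν|`. -/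
def lipDist {S : Type*} [TopologicalSpace S] [MeasurableSpace S] (c : S → S → ℝ)
    (μ ν : Measure S) : ℝ≥0∞ :=
  ⨆ u ∈ LipC c, ENNReal.ofReal |∫ x, u x ∂μ - ∫ x, u x ∂ν|

/-- Regular conditional distribution of `Z` given the sub-σ-algebra `M`. -/
def IsRCD {Ω S : Type*} {mΩ : MeasurableSpace Ω} [MeasurableSpace S]
    (P : @Measure Ω mΩ) (M : MeasurableSpace Ω) (Z : Ω → S) (κ : Ω → Measure S) : Prop :=
  letI := mΩ
  (∀ ω, IsProbabilityMeasure (κ ω)) ∧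
  (∀ B : Set S, MeasurableSet B → Measurable[M] (fun ω => κ ω B)) ∧
  (∀ A : Set Ω, MeasurableSet[M] A → ∀ B : Set S, MeasurableSet B →
    P (A ∩ Z ⁻¹' B) = ∫⁻ ω in A, κ ω B ∂P)

/-- The law `P_X` of a random variable. -/
def law {Ω S : Type*} {mΩ : MeasurableSpace Ω} [MeasurableSpace S]
    (P : @Measure Ω mΩ) (X : Ω → S) : Measure S :=
  letI := mΩ
  P.map X

/-- The dependence coefficient
`τ_c(ℳ, X) = E[sup_{f ∈ Lip_c} |∫ f dP_{X|ℳ} - ∫ f dP_X|]`, expressed through a given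
regular conditional distribution `κ` of `X` given `ℳ`. -/
def tauC {Ω S : Type*} {mΩ : MeasurableSpace Ω} [TopologicalSpace S] [MeasurableSpace S]
    (c : S → S → ℝ) (P : @Measure Ω mΩ) (κ : Ω → Measure S) (X : Ω → S) : ℝ≥0∞ :=
  letI := mΩ
  ∫⁻ ω, ⨆ u ∈ LipC c, ENNReal.ofReal |∫ x, u x ∂(κ ω) - ∫ x, u x ∂(law P X)| ∂P

/-!
Through finitely many functions of `Lip_c` the cost becomes a sup distance on a totally bounded
subset of `ℝⁿ`. There, finite Kantorovich–Rubinstein duality, a Hahn–Banach separation, produces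
near-optimal couplings, and (★) recovers `c` as the increasing limit of these distances.

To couple `X` with an independent copy of itself over a parameter `e` carrying the conditional law
`κ e`, the parameter is first quantized: on each cell the averaged law `∫ κ e` is coupled with
`P_X`, which by convexity of `ℓ_c` costs no more than the average of `ℓ_c(κ e, P_X)`. If the
parameter is a point of the Cantor space, the cells shrink along its coordinates and Prokhorov's
theorem gives a limiting coupling whose second coordinate is independent of the whole parameter. In
general `e` enters only through `κ e`, and the σ-algebra of the space of probability measures is
countably generated, hence encoded in the Cantor space. This avoids any measurable selection of
optimal couplings.

Conversely, independence forces the second conditional marginal to be `P_X`, so the easy half of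
duality, applied fibrewise, bounds the cost of any such coupling below by the average of
`ℓ_c(κ e, P_X)`. Finally `U` realizes the coupling as the law of a triple containing `X` and `X*`.
-/

section FiniteTransport

variable {ι κ : Type*} [Fintype ι] [Fintype κ]

/-- The transport plans between two weight functions on finite types: nonnegative matrices with
row sums `μ` and column sums `ν`. -/
def finitePlans (μ : ι → ℝ) (ν : κ → ℝ) : Set (ι × κ → ℝ) :=
  {γ | 0 ≤ γ ∧ (∀ i, ∑ j, γ (i, j) = μ i) ∧ ∀ j, ∑ i, γ (i, j) = ν j}

lemma swap_mem_finitePlans {μ : ι → ℝ} {ν : κ → ℝ} {γ : ι × κ → ℝ}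
    (hγ : γ ∈ finitePlans μ ν) :
    γ ∘ Prod.swap ∈ finitePlans ν μ :=
  ⟨fun p => hγ.1 p.swap, hγ.2.2, hγ.2.1⟩

lemma eq_zero_of_mem_finitePlans {μ : ι → ℝ} {ν : κ → ℝ} {γ : ι × κ → ℝ}
    (hγ : γ ∈ finitePlans μ ν) {j : κ} (hj : ν j = 0) (i : ι) : γ (i, j) = 0 := by
  rw [← hγ.2.2 j, Finset.sum_eq_zero_iff_of_nonneg fun i _ => hγ.1 (i, j)] at hj
  exact hj i (Finset.mem_univ i)

/-- The row sums, the column sums and the total cost of a matrix, as a linear map. -/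
def sumsAndCost (d : ι → κ → ℝ) : (ι × κ → ℝ) →ₗ[ℝ] (ι → ℝ) × (κ → ℝ) × ℝ where
  toFun γ := (fun i => ∑ j, γ (i, j), fun j => ∑ i, γ (i, j), ∑ p, γ p * d p.1 p.2)
  map_add' γ γ' := by
    simp only [Pi.add_apply, Finset.sum_add_distrib, add_mul]
    rfl
  map_smul' a γ := by
    simp only [Pi.smul_apply, smul_eq_mul, RingHom.id_apply, mul_assoc, ← Finset.mul_sum]
    rfl

lemma sumsAndCost_single [DecidableEq ι] [DecidableEq κ] (d : ι → κ → ℝ) (i : ι) (j : κ) :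
    sumsAndCost d (Pi.single (i, j) 1) = (Pi.single i 1, Pi.single j 1, d i j) := by
  refine Prod.ext ?_ (Prod.ext ?_ ?_)
  · ext k
    simp [sumsAndCost, Pi.single_apply, Prod.ext_iff, ite_and]
  · ext k
    simp [sumsAndCost, Pi.single_apply, Prod.ext_iff, ite_and]
  · simp [sumsAndCost, Pi.single_apply]

lemma linearMap_prod_pi_apply [DecidableEq ι] [DecidableEq κ]
    (f : (ι → ℝ) × (κ → ℝ) × ℝ →ₗ[ℝ] ℝ) (p : ι → ℝ) (q : κ → ℝ) (r : ℝ) :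
    f (p, q, r) = ∑ i, f (Pi.single i 1, 0, 0) * p i + ∑ j, f (0, Pi.single j 1, 0) * q j
      + f (0, 0, 1) * r := by
  have hsplit : (p, q, r) = ∑ i, p i • ((Pi.single i 1, 0, 0) : (ι → ℝ) × (κ → ℝ) × ℝ)
      + ∑ j, q j • ((0, Pi.single j 1, 0) : (ι → ℝ) × (κ → ℝ) × ℝ)
      + r • ((0, 0, 1) : (ι → ℝ) × (κ → ℝ) × ℝ) := by
    refine Prod.ext ?_ (Prod.ext ?_ ?_)
    · ext i
      simp [Prod.fst_sum, Finset.sum_apply, Pi.single_apply]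
    · ext j
      simp [Prod.fst_sum, Prod.snd_sum, Finset.sum_apply, Pi.single_apply]
    · simp [Prod.snd_sum]
  rw [hsplit]
  simp only [map_add, map_sum, map_smul, smul_eq_mul, mul_comm]

lemma nonpos_of_forall_le_lt_mul {t V b : ℝ} (h : ∀ r ≤ V, b < t * r) : t ≤ 0 := by
  by_contra! ht
  have hlt := h (min V (b / t)) (min_le_left _ _)
  have hle : t * min V (b / t) ≤ t * (b / t) := by gcongr; exact min_le_right _ _
  rw [mul_div_cancel₀ _ ht.ne'] at hle
  exact hlt.not_ge hle

/- The compact convex set of sums and costs of probability matrices is separated from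
`{μ} × {ν} × (-∞, V]`; the coefficient `-s` of the cost in the separating functional is
nonpositive because the half-line is unbounded below. -/
theorem exists_finitePlan_cost_le {d : ι → κ → ℝ} {μ : ι → ℝ} {ν : κ → ℝ} {V : ℝ}
    (hμ : ∑ i, μ i = 1)
    (hV : ∀ s ≥ 0, ∀ (φ : ι → ℝ) (ψ : κ → ℝ), (∀ i j, φ i + ψ j ≤ s * d i j) →
      ∑ i, φ i * μ i + ∑ j, ψ j * ν j ≤ s * V) :
    ∃ γ ∈ finitePlans μ ν, ∑ p, γ p * d p.1 p.2 ≤ V := by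
  classical
  by_contra! hno
  have hdisj : Disjoint (sumsAndCost d '' stdSimplex ℝ (ι × κ)) ({μ} ×ˢ {ν} ×ˢ Iic V) := by
    rw [Set.disjoint_left]
    rintro _ ⟨γ, hγ, rfl⟩ ⟨hrow, hcol, hcost⟩
    exact (hno γ ⟨hγ.1, congrFun hrow, congrFun hcol⟩).not_ge hcost
  obtain ⟨f, a, b, hfa, hab, hfb⟩ := geometric_hahn_banach_compact_closed
    ((convex_stdSimplex ℝ (ι × κ)).linear_image (sumsAndCost d))
    ((isCompact_stdSimplex ℝ (ι × κ)).image (sumsAndCost d).continuous_of_finiteDimensional)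
    ((convex_singleton μ).prod ((convex_singleton ν).prod (convex_Iic V)))
    (isClosed_singleton.prod (isClosed_singleton.prod isClosed_Iic)) hdisj
  set φ : ι → ℝ := fun i => f (Pi.single i 1, 0, 0)
  set ψ : κ → ℝ := fun j => f (0, Pi.single j 1, 0)
  set t : ℝ := f (0, 0, 1)
  have hf (p q r) : f (p, q, r) = ∑ i, φ i * p i + ∑ j, ψ j * q j + t * r :=
    linearMap_prod_pi_apply f.toLinearMap p q r
  have hbelow (r) (hr : r ≤ V) : b < ∑ i, φ i * μ i + ∑ j, ψ j * ν j + t * r :=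
    hf μ ν r ▸ hfb (μ, ν, r) ⟨rfl, rfl, hr⟩
  have ht : t ≤ 0 := nonpos_of_forall_le_lt_mul (V := V)
    (b := b - (∑ i, φ i * μ i + ∑ j, ψ j * ν j)) fun r hr => by linarith [hbelow r hr]
  have habove (i j) : φ i + ψ j + t * d i j < a := by
    simpa [sumsAndCost_single, hf, Pi.single_apply] using
      hfa _ ⟨_, single_mem_stdSimplex ℝ (i, j), rfl⟩
  have hdual := hV (-t) (neg_nonneg.2 ht) (fun i => φ i - a) ψ fun i j => by
    linarith [habove i j]
  simp only [sub_mul, Finset.sum_sub_distrib, ← Finset.mul_sum, hμ] at hdual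
  linarith [hbelow V le_rfl]

end FiniteTransport

section KantorovichRubinstein

variable {ι : Type*} [Fintype ι]

/-- The `c`-transform of optimal transport for the cost `s * dist`: the largest potential that is
dual admissible together with `ψ`. -/
def distTransform [PseudoMetricSpace ι] [Nonempty ι] (s : NNReal) (ψ : ι → ℝ) (i : ι) : ℝ :=
  Finset.univ.inf' Finset.univ_nonempty fun j => s * dist i j - ψ j

lemma distTransform_le [PseudoMetricSpace ι] [Nonempty ι] (s : NNReal) (ψ : ι → ℝ) (i j : ι) :
    distTransform s ψ i ≤ s * dist i j - ψ j :=
  Finset.inf'_le _ (Finset.mem_univ j)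

lemma le_distTransform [PseudoMetricSpace ι] [Nonempty ι] {s : NNReal} {ψ : ι → ℝ} {i : ι}
    {a : ℝ} (h : ∀ j, a ≤ s * dist i j - ψ j) : a ≤ distTransform s ψ i :=
  Finset.le_inf' _ _ fun j _ => h j

lemma lipschitzWith_distTransform [PseudoMetricSpace ι] [Nonempty ι] (s : NNReal)
    (ψ : ι → ℝ) : LipschitzWith s (distTransform s ψ) := by
  refine LipschitzWith.of_le_add_mul _ fun i k => ?_
  rw [← sub_le_iff_le_add]
  refine le_distTransform fun j => ?_
  have htri : s * dist i j ≤ s * (dist i k + dist k j) := by gcongr; exact dist_triangle i k j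
  linarith [distTransform_le s ψ i j]

lemma sum_mul_sub_sum_mul_le_of_lipschitzWith [PseudoMetricSpace ι] {μ ν : ι → ℝ} {V : ℝ}
    (hμν : ∑ i, μ i = ∑ i, ν i)
    (hV : ∀ u : ι → ℝ, LipschitzWith 1 u → ∑ i, u i * μ i - ∑ i, u i * ν i ≤ V)
    {s : NNReal} {u : ι → ℝ} (hu : LipschitzWith s u) :
    ∑ i, u i * μ i - ∑ i, u i * ν i ≤ s * V := by
  obtain rfl | hs := eq_zero_or_pos s
  · obtain hι | ⟨⟨k⟩⟩ := isEmpty_or_nonempty ι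
    · simp
    have hconst (i) : u i = u k := dist_le_zero.1 (by simpa using hu.dist_le_mul i k)
    simp [hconst, ← Finset.mul_sum, hμν]
  · have hscaled := hV (fun i => (s : ℝ)⁻¹ * u i) <| LipschitzWith.mk_one fun i k => by
      rw [Real.dist_eq, ← mul_sub, abs_mul, abs_of_nonneg (by positivity), ← Real.dist_eq,
        inv_mul_le_iff₀ (by exact_mod_cast hs)]
      exact hu.dist_le_mul i k
    simp only [mul_assoc, ← Finset.mul_sum, ← mul_sub] at hscaled
    rwa [inv_mul_le_iff₀ (by exact_mod_cast hs)] at hscaled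

theorem exists_finitePlan_sum_dist_le [PseudoMetricSpace ι] {μ ν : ι → ℝ}
    (hμ : μ ∈ stdSimplex ℝ ι) (hν : ν ∈ stdSimplex ℝ ι) {V : ℝ}
    (hV : ∀ u : ι → ℝ, LipschitzWith 1 u → ∑ i, u i * μ i - ∑ i, u i * ν i ≤ V) :
    ∃ γ ∈ finitePlans μ ν, ∑ p, γ p * dist p.1 p.2 ≤ V := by
  refine exists_finitePlan_cost_le hμ.2 fun s hs φ ψ hφψ => ?_
  have hι : Nonempty ι := by
    by_contra hι
    rw [not_nonempty_iff] at hι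
    simpa using hμ.2
  lift s to NNReal using hs
  set w := distTransform s ψ
  have hφ : ∑ i, φ i * μ i ≤ ∑ i, w i * μ i := Finset.sum_le_sum fun i _ =>
    mul_le_mul_of_nonneg_right (le_distTransform fun j => by linarith [hφψ i j]) (hμ.1 i)
  have hψ : ∑ i, ψ i * ν i ≤ -∑ i, w i * ν i := by
    rw [← Finset.sum_neg_distrib]
    refine Finset.sum_le_sum fun i _ => ?_
    rw [← neg_mul]
    refine mul_le_mul_of_nonneg_right ?_ (hν.1 i)
    have hdiag := distTransform_le s ψ i i
    rw [dist_self, mul_zero] at hdiag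
    linarith
  have hw := sum_mul_sub_sum_mul_le_of_lipschitzWith (hμ.2.trans hν.2.symm) hV
    (lipschitzWith_distTransform s ψ)
  linarith

end KantorovichRubinstein

section BlockGluing

variable {α β ι κ : Type*} [MeasurableSpace α] [MeasurableSpace β]
  [Fintype ι] [Fintype κ]
  {q : α → ι} {r : β → κ} {μ : Measure α} {ν : Measure β} {γ : ι × κ → ℝ}

/-- Given quantizers `q` and `r` of two measure spaces and a matrix `γ` of weights, the measure
that has mass `γ (i, j)` on the block `q = i, r = j`, spread there as the product of the
conditional measures. -/
def blockGluing (q : α → ι) (r : β → κ) (μ : Measure α) (ν : Measure β) (γ : ι × κ → ℝ) :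
    Measure (α × β) :=
  ∑ p, ENNReal.ofReal (γ p) • (μ[|q ⁻¹' {p.1}]).prod (ν[|r ⁻¹' {p.2}])

lemma map_swap_blockGluing :
    (blockGluing q r μ ν γ).map Prod.swap = blockGluing r q ν μ (γ ∘ Prod.swap) := by
  rw [blockGluing, Measure.map_finset_sum measurable_swap.aemeasurable, blockGluing]
  simp_rw [Measure.map_smul, Measure.prod_swap]
  exact Fintype.sum_equiv (Equiv.prodComm ι κ) _ _ fun p => rfl

lemma lintegral_blockGluing_le [MeasurableSpace ι] [MeasurableSingletonClass ι]
    [MeasurableSpace κ] [MeasurableSingletonClass κ]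
    (hq : Measurable q) (hr : Measurable r) {f : α × β → ℝ≥0∞}
    {K : ι → κ → ℝ≥0∞} (hf : ∀ x y, f (x, y) ≤ K (q x) (r y)) :
    ∫⁻ z, f z ∂blockGluing q r μ ν γ ≤ ∑ p, ENNReal.ofReal (γ p) * K p.1 p.2 := by
  rw [blockGluing, lintegral_finsetSum_measure]
  refine Finset.sum_le_sum fun p _ => ?_
  rw [lintegral_smul_measure, smul_eq_mul]
  gcongr
  have hq_mem := Measure.quasiMeasurePreserving_fst (ν := ν[|r ⁻¹' {p.2}]).ae
    (ae_cond_mem (μ := μ) (hq (measurableSet_singleton p.1)))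
  have hr_mem := Measure.quasiMeasurePreserving_snd (μ := μ[|q ⁻¹' {p.1}]).ae
    (ae_cond_mem (μ := ν) (hr (measurableSet_singleton p.2)))
  calc ∫⁻ z, f z ∂(μ[|q ⁻¹' {p.1}]).prod (ν[|r ⁻¹' {p.2}])
      ≤ ∫⁻ _, K p.1 p.2 ∂(μ[|q ⁻¹' {p.1}]).prod (ν[|r ⁻¹' {p.2}]) := by
        refine lintegral_mono_ae ?_
        filter_upwards [hq_mem, hr_mem] with z (hz₁ : q z.1 = p.1) (hz₂ : r z.2 = p.2)
        simpa only [hz₁, hz₂] using hf z.1 z.2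
    _ ≤ K p.1 p.2 * (1 * 1) := by
        rw [lintegral_const, ← univ_prod_univ, Measure.prod_prod]
        gcongr <;> exact prob_le_one
    _ = K p.1 p.2 := by simp

variable [IsFiniteMeasure μ] [IsFiniteMeasure ν]

lemma fst_blockGluing [MeasurableSpace ι] [MeasurableSingletonClass ι] (hq : Measurable q)
    (hγ : γ ∈ finitePlans (fun i => μ.real (q ⁻¹' {i})) fun j => ν.real (r ⁻¹' {j})) :
    (blockGluing q r μ ν γ).fst = μ := by
  ext A hA
  have hblock (p : ι × κ) :
      ENNReal.ofReal (γ p) * (μ[|q ⁻¹' {p.1}].prod (ν[|r ⁻¹' {p.2}])) (A ×ˢ univ)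
        = ENNReal.ofReal (γ p) * (μ[|q ⁻¹' {p.1}]) A := by
    obtain ⟨i, j⟩ := p
    by_cases hj : ν (r ⁻¹' {j}) = 0
    · have hzero : ν.real (r ⁻¹' {j}) = 0 := by simp [Measure.real, hj]
      simp [eq_zero_of_mem_finitePlans hγ hzero i]
    · have := cond_isProbabilityMeasure hj
      simp [Measure.prod_prod]
  have hrow (i : ι) : ∑ j, ENNReal.ofReal (γ (i, j)) = μ (q ⁻¹' {i}) := by
    rw [← ENNReal.ofReal_sum_of_nonneg fun j _ => hγ.1 (i, j), hγ.2.1, ofReal_measureReal]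
  simp only [Measure.fst_apply hA, ← prod_univ, blockGluing, Measure.finsetSum_apply,
    Measure.smul_apply, smul_eq_mul, hblock, Fintype.sum_prod_type, ← Finset.sum_mul, hrow]
  conv_rhs => rw [← sum_meas_smul_cond_fiber hq μ]
  simp [Measure.finsetSum_apply]

lemma snd_blockGluing [MeasurableSpace κ] [MeasurableSingletonClass κ] (hr : Measurable r)
    (hγ : γ ∈ finitePlans (fun i => μ.real (q ⁻¹' {i})) fun j => ν.real (r ⁻¹' {j})) :
    (blockGluing q r μ ν γ).snd = ν := by
  rw [← Measure.fst_map_swap, map_swap_blockGluing,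
    fst_blockGluing hr (swap_mem_finitePlans hγ)]

end BlockGluing

section ApproximateCoupling

lemma exists_lipschitzWith_extension {F : Type*} [PseudoMetricSpace F] {t : Set F} {u : t → ℝ}
    {K : NNReal} (hu : LipschitzWith K u) : ∃ g : F → ℝ, LipschitzWith K g ∧ ∀ y : t, g y = u y := by
  have hext (y : t) : Function.extend Subtype.val u 0 y = u y :=
    Subtype.val_injective.extend_apply ..
  have hlip : LipschitzOnWith K (Function.extend Subtype.val u 0) t :=
    lipschitzOnWith_iff_restrict.2 (by convert hu using 1; exact funext hext)
  obtain ⟨g, hg, hgt⟩ := hlip.extend_real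
  exact ⟨g, hg, fun y => (hgt y.2).symm.trans (hext y)⟩

variable {S F : Type*} [MeasurableSpace S] [MetricSpace F] [MeasurableSpace F]

lemma exists_quantizer [OpensMeasurableSpace F] {φ : S → F} (hφ : Measurable φ)
    (hrange : TotallyBounded (range φ)) [Nonempty S] {ε : ℝ} (hε : 0 < ε) :
    ∃ (t : Finset F) (q : S → t), Measurable q ∧ ∀ x, dist (q x : F) (φ x) ≤ ε := by
  obtain ⟨net, hnet, hcover⟩ := Metric.totallyBounded_iff.1 hrange ε hε
  set l := hnet.toFinset.toList
  let e (k : ℕ) : F := l.getD k (φ (Classical.arbitrary S))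
  let near := SimpleFunc.nearestPt e l.length
  refine ⟨near.range, fun x => ⟨near (φ x), near.mem_range_self _⟩,
    (near.measurable.comp hφ).subtype_mk, fun x => ?_⟩
  obtain ⟨y, hy, hxy⟩ := mem_iUnion₂.1 (hcover (mem_range_self x))
  obtain ⟨k, hk, rfl⟩ := List.mem_iff_getElem.1 (show y ∈ l by simpa [l] using hy)
  have hle := SimpleFunc.edist_nearestPt_le e (φ x) hk.le
  have hek : e k = l[k] := List.getD_eq_getElem _ _ hk
  rw [hek, edist_dist, edist_dist, ENNReal.ofReal_le_ofReal_iff dist_nonneg] at hle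
  exact hle.trans (by rw [dist_comm]; exact hxy.le)

lemma integral_comp_fintype {ι : Type*} [Fintype ι] [MeasurableSpace ι]
    [MeasurableSingletonClass ι] {μ : Measure S} [IsFiniteMeasure μ] {q : S → ι}
    (hq : Measurable q) (u : ι → ℝ) :
    ∫ x, u (q x) ∂μ = ∑ i, u i * μ.real (q ⁻¹' {i}) := by
  rw [← integral_map hq.aemeasurable (measurable_of_finite u).aestronglyMeasurable,
    integral_fintype .of_finite]
  simp_rw [map_measureReal_apply hq (measurableSet_singleton _), smul_eq_mul, mul_comm]

lemma sum_measureReal_fiber {ι : Type*} [Fintype ι] [MeasurableSpace ι]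
    [MeasurableSingletonClass ι] (μ : Measure S) [IsProbabilityMeasure μ] {q : S → ι}
    (hq : Measurable q) : ∑ i, μ.real (q ⁻¹' {i}) = 1 := by
  simpa using (integral_comp_fintype (μ := μ) hq fun _ => 1).symm

lemma integrable_comp_of_lipschitzWith [OpensMeasurableSpace F] {φ : S → F} (hφ : Measurable φ)
    (hrange : Bornology.IsBounded (range φ)) {μ : Measure S} [IsFiniteMeasure μ] {K : NNReal}
    {u : F → ℝ} (hu : LipschitzWith K u) : Integrable (fun x => u (φ x)) μ := by
  obtain ⟨C, hC⟩ := (hu.isBounded_image hrange).exists_norm_le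
  exact .of_bound (hu.continuous.measurable.comp hφ).aestronglyMeasurable C
    (.of_forall fun x => hC _ (mem_image_of_mem u (mem_range_self x)))

lemma abs_integral_sub_integral_le {μ : Measure S} [IsProbabilityMeasure μ] {f g : S → ℝ} {ε : ℝ}
    (hf : Integrable f μ) (hg : Integrable g μ) (h : ∀ x, |f x - g x| ≤ ε) :
    |∫ x, f x ∂μ - ∫ x, g x ∂μ| ≤ ε := by
  rw [← integral_sub hf hg]
  simpa using norm_integral_le_of_norm_le_const (μ := μ) (f := fun x => f x - g x) (.of_forall h)

lemma lintegral_edist_blockGluing_le {t : Finset F} [MeasurableSingletonClass t] {φ : S → F}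
    {μ ν : Measure S} [IsProbabilityMeasure μ] {q : S → t} (hq : Measurable q)
    {ε : ℝ} (hqφ : ∀ x, dist (q x : F) (φ x) ≤ ε) (hε : 0 ≤ ε) {γ : t × t → ℝ}
    (hγ : γ ∈ finitePlans (fun i => μ.real (q ⁻¹' {i})) fun j => ν.real (q ⁻¹' {j})) :
    ∫⁻ p, edist (φ p.1) (φ p.2) ∂blockGluing q q μ ν γ ≤
      ENNReal.ofReal (∑ p, γ p * dist p.1 p.2 + 2 * ε) := by
  have hmass : ∑ p, γ p = 1 := by
    rw [Fintype.sum_prod_type, ← sum_measureReal_fiber μ hq]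
    exact Finset.sum_congr rfl fun i _ => hγ.2.1 i
  have hedist (x y : S) : edist (φ x) (φ y) ≤ ENNReal.ofReal (dist (q x) (q y) + 2 * ε) := by
    rw [edist_dist, Subtype.dist_eq]
    gcongr
    have htri := dist_triangle4 (φ x) (q x : F) (q y) (φ y)
    rw [dist_comm (φ x) (q x)] at htri
    linarith [hqφ x, hqφ y]
  calc ∫⁻ p, edist (φ p.1) (φ p.2) ∂blockGluing q q μ ν γ
      ≤ ∑ p, ENNReal.ofReal (γ p) * ENNReal.ofReal (dist p.1 p.2 + 2 * ε) :=
        lintegral_blockGluing_le (K := fun i j => ENNReal.ofReal (dist i j + 2 * ε)) hq hq hedist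
    _ = ENNReal.ofReal (∑ p, γ p * (dist p.1 p.2 + 2 * ε)) := by
        simp_rw [← ENNReal.ofReal_mul (hγ.1 _)]
        exact (ENNReal.ofReal_sum_of_nonneg fun p _ => mul_nonneg (hγ.1 p) (by positivity)).symm
    _ = ENNReal.ofReal (∑ p, γ p * dist p.1 p.2 + 2 * ε) := by
        simp_rw [mul_add, Finset.sum_add_distrib, ← Finset.sum_mul, hmass, one_mul]

/- Quantize `φ` to an `ε`-net, solve the finite transport problem between the quantized laws, and
glue. Passing to the net costs `2 * ε` in the dual problem and `2 * ε` in the primal one. -/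
theorem exists_coupling_lintegral_edist_le [OpensMeasurableSpace F] {φ : S → F}
    (hφ : Measurable φ) (hrange : TotallyBounded (range φ)) {μ ν : Measure S}
    [IsProbabilityMeasure μ] [IsProbabilityMeasure ν] {V : ℝ}
    (hV : ∀ u : F → ℝ, LipschitzWith 1 u → ∫ x, u (φ x) ∂μ - ∫ x, u (φ x) ∂ν ≤ V)
    {ε : ℝ} (hε : 0 < ε) :
    ∃ π ∈ Couplings μ ν, ∫⁻ p, edist (φ p.1) (φ p.2) ∂π ≤ ENNReal.ofReal (V + 4 * ε) := by
  have : Nonempty S := nonempty_of_isProbabilityMeasure μ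
  obtain ⟨t, q, hq, hqφ⟩ := exists_quantizer hφ hrange hε
  have hdual (u : t → ℝ) (hu : LipschitzWith 1 u) :
      ∑ i, u i * μ.real (q ⁻¹' {i}) - ∑ i, u i * ν.real (q ⁻¹' {i}) ≤ V + 2 * ε := by
    obtain ⟨g, hg, hgu⟩ := exists_lipschitzWith_extension (t := (t : Set F)) hu
    have hclose (m : Measure S) [IsProbabilityMeasure m] :
        |∫ x, u (q x) ∂m - ∫ x, g (φ x) ∂m| ≤ ε := by
      refine abs_integral_sub_integral_le ?_
        (integrable_comp_of_lipschitzWith hφ hrange.isBounded hg) fun x => ?_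
      · exact (Integrable.of_finite (μ := m.map q) (f := u)).comp_measurable hq
      · rw [← hgu, ← Real.dist_eq]
        simpa using (hg.dist_le_mul _ _).trans (by simpa using hqφ x)
    rw [← integral_comp_fintype hq, ← integral_comp_fintype hq]
    linarith [hV g hg, abs_le.1 (hclose μ), abs_le.1 (hclose ν)]
  obtain ⟨γ, hγ, hcost⟩ := exists_finitePlan_sum_dist_le
    ⟨fun _ => measureReal_nonneg, sum_measureReal_fiber μ hq⟩
    ⟨fun _ => measureReal_nonneg, sum_measureReal_fiber ν hq⟩ hdual
  have hfst := fst_blockGluing hq hγ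
  refine ⟨blockGluing q q μ ν γ, ⟨⟨?_⟩, hfst, snd_blockGluing hq hγ⟩, ?_⟩
  · rw [← Measure.fst_univ, hfst, measure_univ]
  · exact (lintegral_edist_blockGluing_le hq hqφ hε.le hγ).trans
      (ENNReal.ofReal_le_ofReal (by linarith))

end ApproximateCoupling

section LipschitzFamily

variable {S : Type*} [TopologicalSpace S] {c : S → S → ℝ}

namespace StarCond

lemma nonneg (hstar : StarCond c) (x y : S) : 0 ≤ c x y := by
  rw [hstar x y]
  exact Real.sSup_nonneg fun _ ⟨u, _, hu⟩ => hu ▸ abs_nonneg _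

lemma zero_mem_LipC (hstar : StarCond c) : (fun _ => 0) ∈ LipC c :=
  ⟨continuous_const, ⟨0, by simp⟩, by simpa using hstar.nonneg⟩

lemma isLUB (hstar : StarCond c) :
    IsLUB ((fun (u : S → ℝ) (p : S × S) => |u p.1 - u p.2|) '' LipC c) fun p => c p.1 p.2 := by
  refine ⟨forall_mem_image.2 fun u hu p => hu.2.2 p.1 p.2, fun g hg p => ?_⟩
  dsimp only
  rw [hstar p.1 p.2]
  refine csSup_le ⟨_, _, hstar.zero_mem_LipC, rfl⟩ ?_
  rintro _ ⟨u, hu, rfl⟩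
  exact hg (mem_image_of_mem _ hu) p

theorem exists_seq_isLUB [HereditarilyLindelofSpace (S × S)] [Nonempty S] (hstar : StarCond c) :
    ∃ v : ℕ → S → ℝ, (∀ n, v n ∈ LipC c) ∧
      ∀ x y, IsLUB (range fun n => |v n x - v n y|) (c x y) := by
  obtain ⟨D, hDsub, hDcount, hD⟩ := exists_countable_lowerSemicontinuous_isLUB
    (forall_mem_image.2 fun u hu => by
      have hcont := hu.1
      exact Continuous.lowerSemicontinuous (by fun_prop)) hstar.isLUB
  obtain ⟨f, rfl⟩ := hDcount.exists_eq_range hD.nonempty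
  choose v hv hvf using fun n => hDsub (mem_range_self n)
  refine ⟨v, hv, fun x y => ?_⟩
  have hxy := isLUB_pi.1 hD (x, y)
  have hcomp : Function.eval (x, y) ∘ f = fun n => |v n x - v n y| :=
    funext fun n => (congrFun (hvf n) (x, y)).symm
  rwa [← range_comp, hcomp] at hxy

end StarCond

/-- The first `n` functions of a sequence, as a map into `Fin n → ℝ`. Its target carries the
supremum metric, so that `edist (truncate v n x) (truncate v n y)` is the maximum of
`|v i x - v i y|` over `i < n`. -/
def truncate {S : Type*} (v : ℕ → S → ℝ) (n : ℕ) (x : S) (i : Fin n) : ℝ := v i x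

variable {v : ℕ → S → ℝ}

lemma continuous_truncate (hv : ∀ i, v i ∈ LipC c) (n : ℕ) : Continuous (truncate v n) :=
  continuous_pi fun i => (hv i).1

lemma totallyBounded_range_truncate (hv : ∀ i, v i ∈ LipC c) (n : ℕ) :
    TotallyBounded (range (truncate v n)) := by
  choose K hK using fun i => (hv i).2.1
  refine (isCompact_univ_pi fun i : Fin n => isCompact_Icc (a := -K i) (b := K i))
    |>.totallyBounded.subset ?_
  rintro _ ⟨x, rfl⟩ i -
  exact abs_le.1 (hK i x)

lemma dist_truncate_le (hv : ∀ i, v i ∈ LipC c) (n : ℕ) (x y : S) :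
    dist (truncate v n x) (truncate v n y) ≤ c x y :=
  (dist_pi_le_iff ((abs_nonneg _).trans ((hv 0).2.2 x y))).2 fun i => (hv i).2.2 x y

lemma comp_truncate_mem_LipC (hv : ∀ i, v i ∈ LipC c) {n : ℕ} {u : (Fin n → ℝ) → ℝ}
    (hu : LipschitzWith 1 u) : (fun x => u (truncate v n x)) ∈ LipC c := by
  obtain ⟨C, hC⟩ := (hu.isBounded_image
    (totallyBounded_range_truncate hv n).isBounded).exists_norm_le
  refine ⟨hu.continuous.comp (continuous_truncate hv n),
    ⟨C, fun x => hC _ (mem_image_of_mem u (mem_range_self x))⟩, fun x y => ?_⟩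
  have hdist := hu.dist_le_mul (truncate v n x) (truncate v n y)
  rw [NNReal.coe_one, one_mul] at hdist
  exact hdist.trans (dist_truncate_le hv n x y)

lemma monotone_edist_truncate {S : Type*} (v : ℕ → S → ℝ) (x y : S) :
    Monotone fun n => edist (truncate v n x) (truncate v n y) := fun _ n hmn =>
  edist_pi_le_iff.2 fun i =>
    edist_le_pi_edist (truncate v n x) (truncate v n y) (Fin.castLE hmn i)

lemma iSup_edist_truncate (hv : ∀ i, v i ∈ LipC c) {x y : S}
    (hlub : IsLUB (range fun n => |v n x - v n y|) (c x y)) :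
    ⨆ n, edist (truncate v n x) (truncate v n y) = ENNReal.ofReal (c x y) := by
  refine le_antisymm (iSup_le fun n => ?_) (le_of_forall_lt fun a ha => ?_)
  · rw [edist_dist]
    exact ENNReal.ofReal_le_ofReal (dist_truncate_le hv n x y)
  · have ha_top := ha.ne_top
    rw [ENNReal.lt_ofReal_iff_toReal_lt ha_top] at ha
    obtain ⟨_, ⟨n, rfl⟩, han, -⟩ := hlub.exists_between ha
    have hcoord := edist_le_pi_edist (truncate v (n + 1) x) (truncate v (n + 1) y) (Fin.last n)
    rw [edist_dist] at hcoord
    exact ((ENNReal.lt_ofReal_iff_toReal_lt ha_top).2 han).trans_le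
      (hcoord.trans (le_iSup (fun n => edist (truncate v n x) (truncate v n y)) (n + 1)))

lemma continuous_edist_truncate (hv : ∀ i, v i ∈ LipC c) (n : ℕ) :
    Continuous fun p : S × S => edist (truncate v n p.1) (truncate v n p.2) :=
  ((continuous_truncate hv n).comp continuous_fst).edist
    ((continuous_truncate hv n).comp continuous_snd)

lemma StarCond.measurable_ofReal_comp [HereditarilyLindelofSpace (S × S)] [Nonempty S]
    [MeasurableSpace S] [OpensMeasurableSpace (S × S)] (hstar : StarCond c) {α : Type*}
    [MeasurableSpace α] {f g : α → S} (hf : Measurable f) (hg : Measurable g) :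
    Measurable fun a => ENNReal.ofReal (c (f a) (g a)) := by
  obtain ⟨v, hv, hlub⟩ := hstar.exists_seq_isLUB
  have hcost : Measurable fun p : S × S => ENNReal.ofReal (c p.1 p.2) := by
    simp_rw [← fun p : S × S => iSup_edist_truncate hv (hlub p.1 p.2)]
    exact .iSup fun n => (continuous_edist_truncate hv n).measurable
  exact hcost.comp (hf.prodMk hg)

lemma ofReal_abs_integral_sub_le_lipDist [MeasurableSpace S] {u : S → ℝ} (hu : u ∈ LipC c)
    (μ ν : Measure S) :
    ENNReal.ofReal |∫ x, u x ∂μ - ∫ x, u x ∂ν| ≤ lipDist c μ ν :=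
  le_iSup₂ (f := fun u (_ : u ∈ LipC c) => ENNReal.ofReal |∫ x, u x ∂μ - ∫ x, u x ∂ν|) u hu

theorem exists_coupling_lintegral_edist_truncate_le [MeasurableSpace S] [OpensMeasurableSpace S]
    (hv : ∀ i, v i ∈ LipC c) (n : ℕ) (μ ν : Measure S) [IsProbabilityMeasure μ]
    [IsProbabilityMeasure ν] {ε : ℝ} (hε : 0 < ε) :
    ∃ π ∈ Couplings μ ν, ∫⁻ p, edist (truncate v n p.1) (truncate v n p.2) ∂π ≤
      lipDist c μ ν + ENNReal.ofReal ε := by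
  by_cases hfin : lipDist c μ ν = ⊤
  · exact ⟨μ.prod ν, ⟨inferInstance, by simp, by simp⟩, by simp [hfin]⟩
  have hdual (u : (Fin n → ℝ) → ℝ) (hu : LipschitzWith 1 u) :
      ∫ x, u (truncate v n x) ∂μ - ∫ x, u (truncate v n x) ∂ν ≤ (lipDist c μ ν).toReal :=
    (le_abs_self _).trans <| (ENNReal.ofReal_le_iff_le_toReal hfin).1 <|
      ofReal_abs_integral_sub_le_lipDist (comp_truncate_mem_LipC hv hu) μ ν
  obtain ⟨π, hπ, hcost⟩ := exists_coupling_lintegral_edist_le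
    (continuous_truncate hv n).measurable (totallyBounded_range_truncate hv n) hdual
    (ε := ε / 4) (by positivity)
  refine ⟨π, hπ, hcost.trans_eq ?_⟩
  rw [mul_div_cancel₀ ε four_ne_zero, ENNReal.ofReal_add toReal_nonneg hε.le,
    ENNReal.ofReal_toReal hfin]

lemma lipDist_fst_snd_le_lintegral [MeasurableSpace S] [OpensMeasurableSpace S]
    (c : S → S → ℝ) (π : Measure (S × S)) [IsFiniteMeasure π] :
    lipDist c π.fst π.snd ≤ ∫⁻ p, ENNReal.ofReal (c p.1 p.2) ∂π := by
  refine iSup₂_le fun u hu => ?_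
  obtain ⟨K, hK⟩ := hu.2.1
  have hmeas : Measurable u := hu.1.measurable
  have hfst : Integrable (fun p : S × S => u p.1) π :=
    .of_bound (hmeas.comp measurable_fst).aestronglyMeasurable K (.of_forall fun p => hK p.1)
  have hsnd : Integrable (fun p : S × S => u p.2) π :=
    .of_bound (hmeas.comp measurable_snd).aestronglyMeasurable K (.of_forall fun p => hK p.2)
  rw [Measure.fst, Measure.snd, integral_map measurable_fst.aemeasurable
    hmeas.aestronglyMeasurable, integral_map measurable_snd.aemeasurable
    hmeas.aestronglyMeasurable, ← integral_sub hfst hsnd, ← Real.enorm_eq_ofReal_abs]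
  refine (enorm_integral_le_lintegral_enorm _).trans (lintegral_mono fun p => ?_)
  rw [Real.enorm_eq_ofReal_abs]
  exact ENNReal.ofReal_le_ofReal (hu.2.2 _ _)

end LipschitzFamily

section Jensen

variable {E S : Type*} [MeasurableSpace E] [MeasurableSpace S]

lemma integral_comp_measure {μ : Measure E} [SFinite μ] {κ : Kernel E S} [IsSFiniteKernel κ]
    {u : S → ℝ} (hu : Integrable u (κ ∘ₘ μ)) :
    ∫ x, u x ∂(κ ∘ₘ μ) = ∫ e, ∫ x, u x ∂κ e ∂μ := by
  rw [← Measure.snd_compProd, Measure.snd] at hu ⊢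
  rw [integral_map measurable_snd.aemeasurable hu.aestronglyMeasurable,
    Measure.integral_compProd (f := fun p => u p.2) (hu.comp_measurable measurable_snd)]

/- Each `u ∈ Lip_c` contributes the absolute value of an average, which is at most the average of
the absolute values. -/
theorem lipDist_comp_le_lintegral [TopologicalSpace S] [OpensMeasurableSpace S] (c : S → S → ℝ)
    (μ : Measure E) [IsProbabilityMeasure μ] (κ : Kernel E S) [IsMarkovKernel κ]
    (ν : Measure S) :
    lipDist c (κ ∘ₘ μ) ν ≤ ∫⁻ e, lipDist c (κ e) ν ∂μ := by
  refine iSup₂_le fun u hu => ?_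
  obtain ⟨K, hK⟩ := hu.2.1
  have hint : Integrable u (κ ∘ₘ μ) :=
    .of_bound hu.1.measurable.aestronglyMeasurable K (.of_forall hK)
  have hintκ : Integrable (fun e => ∫ x, u x ∂κ e) μ := by
    refine .of_bound hu.1.measurable.stronglyMeasurable.integral_kernel.aestronglyMeasurable K
      (.of_forall fun e => ?_)
    simpa using norm_integral_le_of_norm_le_const (μ := κ e) (f := u) (.of_forall hK)
  calc ENNReal.ofReal |∫ x, u x ∂(κ ∘ₘ μ) - ∫ x, u x ∂ν|
      = ‖∫ e, (∫ x, u x ∂κ e - ∫ x, u x ∂ν) ∂μ‖ₑ := by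
        rw [integral_comp_measure hint, integral_sub hintκ (integrable_const _),
          Real.enorm_eq_ofReal_abs]
        simp
    _ ≤ ∫⁻ e, ‖∫ x, u x ∂κ e - ∫ x, u x ∂ν‖ₑ ∂μ := enorm_integral_le_lintegral_enorm _
    _ ≤ ∫⁻ e, lipDist c (κ e) ν ∂μ := lintegral_mono fun e => by
        rw [Real.enorm_eq_ofReal_abs]
        exact ofReal_abs_integral_sub_le_lipDist hu _ _

end Jensen

section Lifting

variable {A B S : Type*} [MeasurableSpace A] [MeasurableSpace B] [MeasurableSpace S]

lemma map_prodMap_compProd_comap (ρ : Measure A) [SFinite ρ] (η : Kernel B S)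
    [IsSFiniteKernel η] {g : A → B} (hg : Measurable g) :
    (ρ ⊗ₘ η.comap g hg).map (Prod.map g id) = (ρ.map g) ⊗ₘ η := by
  ext s hs
  rw [Measure.map_apply (by fun_prop) hs, Measure.compProd_apply (by measurability),
    Measure.compProd_apply hs, lintegral_map (Kernel.measurable_kernel_prodMk_left hs) hg]
  rfl

theorem exists_kernel_comap_compProd_map_eq [StandardBorelSpace S] [Nonempty S] (ρ : Measure A)
    [SFinite ρ] {g : A → B} (hg : Measurable g) {R : Measure (B × S)} [IsFiniteMeasure R]
    (hR : R.fst = ρ.map g) :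
    ∃ η : Kernel B S, IsMarkovKernel η ∧ (ρ ⊗ₘ η.comap g hg).map (Prod.map g id) = R :=
  ⟨R.condKernel, inferInstance, by
    rw [map_prodMap_compProd_comap, ← hR, R.disintegrate R.condKernel]⟩

end Lifting

section ParametrizedCoupling

variable {E S T : Type*} [MeasurableSpace E] [MeasurableSpace S] [MeasurableSpace T]

/-- `Q` is the joint law of `((e, x), y)`, where `(e, x)` has law `ρ` and `y` has law `ν` and is
independent of `a e`. For `a = id` these are the couplings of `x` and `y` parametrized by `e` that
the reconstruction property asks for; coarser maps `a` occur in the approximation. -/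
structure IsCouplingOver (a : E → T) (ρ : Measure (E × S)) (ν : Measure S)
    (Q : Measure ((E × S) × S)) : Prop where
  fst_eq : Q.fst = ρ
  map_eq_prod : Q.map (fun p => (a p.1.1, p.2)) = (ρ.fst.map a).prod ν

lemma IsCouplingOver.sum {ι : Type*} {a : E → T} (ha : Measurable a) {ρ : ι → Measure (E × S)}
    {ν : Measure S} [SFinite ν] {Q : ι → Measure ((E × S) × S)}
    (hQ : ∀ i, IsCouplingOver a (ρ i) ν (Q i)) :
    IsCouplingOver a (Measure.sum ρ) ν (Measure.sum Q) where
  fst_eq := by simp_rw [Measure.fst_sum, (hQ _).fst_eq]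
  map_eq_prod := by
    rw [Measure.map_sum (by fun_prop), Measure.fst_sum, Measure.map_sum (by fun_prop),
      Measure.prod_sum_left]
    simp_rw [(hQ _).map_eq_prod]

lemma IsCouplingOver.of_ae_eq_const {a : E → T} {t : T}
    {ρ : Measure (E × S)} {ν : Measure S} [SFinite ν] {Q : Measure ((E × S) × S)}
    (hat : ∀ᵐ e ∂ρ.fst, a e = t) (hfst : Q.fst = ρ) (hsnd : Q.snd = ρ univ • ν) :
    IsCouplingOver a ρ ν Q where
  fst_eq := hfst
  map_eq_prod := by
    subst hfst
    have hQ : ∀ᵐ p ∂Q, a p.1.1 = t :=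
      ae_of_ae_map measurable_fst.aemeasurable (ae_of_ae_map measurable_fst.aemeasurable hat)
    rw [Measure.map_congr (hat : a =ᵐ[_] fun _ => t), Measure.map_const, Measure.prod_smul_left,
      Measure.dirac_prod, Measure.fst_univ, ← Measure.map_smul, ← hsnd, Measure.snd,
      Measure.map_map (by fun_prop) (by fun_prop)]
    exact Measure.map_congr (hQ.mono fun p hp => by simp [hp])

variable [TopologicalSpace S] [OpensMeasurableSpace S] [StandardBorelSpace S] [Nonempty S]
  {c : S → S → ℝ} {v : ℕ → S → ℝ}

lemma exists_fst_snd_lintegral_edist_truncate_le (hv : ∀ i, v i ∈ LipC c) (n : ℕ)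
    (μ : Measure E) [IsProbabilityMeasure μ] (κ : Kernel E S) [IsMarkovKernel κ] (ν : Measure S)
    [IsProbabilityMeasure ν] {ε : ℝ} (hε : 0 < ε) :
    ∃ Q : Measure ((E × S) × S), Q.fst = μ ⊗ₘ κ ∧ Q.snd = ν ∧
      ∫⁻ p, edist (truncate v n p.1.2) (truncate v n p.2) ∂Q ≤
        ∫⁻ e, lipDist c (κ e) ν ∂μ + ENNReal.ofReal ε := by
  obtain ⟨π, ⟨_, hπfst, hπsnd⟩, hcost⟩ :=
    exists_coupling_lintegral_edist_truncate_le hv n (κ ∘ₘ μ) ν hε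
  rw [← Measure.snd_compProd] at hπfst
  obtain ⟨η, _, hη⟩ := exists_kernel_comap_compProd_map_eq (μ ⊗ₘ κ) measurable_snd hπfst
  refine ⟨(μ ⊗ₘ κ) ⊗ₘ η.comap Prod.snd measurable_snd, Measure.fst_compProd _ _, ?_, ?_⟩
  · rw [← hπsnd, ← hη, Measure.map_map (by fun_prop) (by fun_prop)]
    rfl
  · have hmeas : Measurable fun p : S × S => edist (truncate v n p.1) (truncate v n p.2) :=
      ((continuous_truncate hv n).measurable.comp measurable_fst).edist
        ((continuous_truncate hv n).measurable.comp measurable_snd)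
    rw [← hη, lintegral_map hmeas (by fun_prop)] at hcost
    exact hcost.trans (by gcongr; exact lipDist_comp_le_lintegral c μ κ ν)

lemma exists_fst_snd_smul_lintegral_edist_truncate_le (hv : ∀ i, v i ∈ LipC c) (n : ℕ)
    (m : Measure E) [IsFiniteMeasure m] (κ : Kernel E S) [IsMarkovKernel κ] (ν : Measure S)
    [IsProbabilityMeasure ν] {ε : ℝ} (hε : 0 < ε) :
    ∃ Q : Measure ((E × S) × S), Q.fst = m ⊗ₘ κ ∧ Q.snd = m univ • ν ∧
      ∫⁻ p, edist (truncate v n p.1.2) (truncate v n p.2) ∂Q ≤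
        ∫⁻ e, lipDist c (κ e) ν ∂m + m univ * ENNReal.ofReal ε := by
  rcases eq_zero_or_neZero m with rfl | _
  · exact ⟨0, by simp⟩
  obtain ⟨Q, hfst, hsnd, hcost⟩ := exists_fst_snd_lintegral_edist_truncate_le hv n
    ((m univ)⁻¹ • m) κ ν hε
  have hm : m univ • (m univ)⁻¹ • m = m := by
    rw [smul_smul, ENNReal.mul_inv_cancel (NeZero.ne _) (measure_ne_top _ _), one_smul]
  refine ⟨m univ • Q, ?_, ?_, ?_⟩
  · rw [Measure.fst, Measure.map_smul, ← Measure.fst, hfst, ← Measure.compProd_smul_left, hm]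
  · rw [Measure.snd, Measure.map_smul, ← Measure.snd, hsnd]
  · calc ∫⁻ p, edist (truncate v n p.1.2) (truncate v n p.2) ∂(m univ • Q)
        ≤ m univ * (∫⁻ e, lipDist c (κ e) ν ∂((m univ)⁻¹ • m) + ENNReal.ofReal ε) := by
          rw [lintegral_smul_measure, smul_eq_mul]
          gcongr
      _ = ∫⁻ e, lipDist c (κ e) ν ∂m + m univ * ENNReal.ofReal ε := by
          rw [mul_add, ← smul_eq_mul (m univ) (∫⁻ _, _ ∂_), ← lintegral_smul_measure, hm]

theorem exists_isCouplingOver_of_countable {ι : Type*} [Countable ι] [MeasurableSpace ι]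
    [MeasurableSingletonClass ι] {a : E → ι} (ha : Measurable a) (hv : ∀ i, v i ∈ LipC c)
    (n : ℕ) (m : Measure E) [IsFiniteMeasure m] (κ : Kernel E S) [IsMarkovKernel κ]
    (ν : Measure S) [IsProbabilityMeasure ν] {ε : ℝ} (hε : 0 < ε) :
    ∃ Q, IsCouplingOver a (m ⊗ₘ κ) ν Q ∧
      ∫⁻ p, edist (truncate v n p.1.2) (truncate v n p.2) ∂Q ≤
        ∫⁻ e, lipDist c (κ e) ν ∂m + m univ * ENNReal.ofReal ε := by
  have hcell (i : ι) : MeasurableSet (a ⁻¹' {i}) := ha (measurableSet_singleton i)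
  have hsum : Measure.sum (fun i => m.restrict (a ⁻¹' {i})) = m := by
    rw [← Measure.restrict_iUnion (pairwise_disjoint_fiber a) hcell, ← preimage_iUnion,
      iUnion_of_singleton, preimage_univ, Measure.restrict_univ]
  choose Q hfst hsnd hcost using fun i =>
    exists_fst_snd_smul_lintegral_edist_truncate_le hv n (m.restrict (a ⁻¹' {i})) κ ν hε
  have hover (i : ι) : IsCouplingOver a (m.restrict (a ⁻¹' {i}) ⊗ₘ κ) ν (Q i) := by
    refine .of_ae_eq_const (t := i) ?_ (hfst i) (by simp [hsnd])
    rw [Measure.fst_compProd]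
    exact ae_restrict_mem (hcell i)
  refine ⟨Measure.sum Q, ?_, ?_⟩
  · rw [← hsum, Measure.compProd_sum_left]
    exact .sum ha hover
  · calc ∫⁻ p, edist (truncate v n p.1.2) (truncate v n p.2) ∂Measure.sum Q
        ≤ ∑' i, (∫⁻ e, lipDist c (κ e) ν ∂m.restrict (a ⁻¹' {i}) +
            m.restrict (a ⁻¹' {i}) univ * ENNReal.ofReal ε) := by
          rw [lintegral_sum_measure]
          exact ENNReal.tsum_le_tsum hcost
      _ = ∫⁻ e, lipDist c (κ e) ν ∂m + m univ * ENNReal.ofReal ε := by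
          rw [ENNReal.tsum_add, ENNReal.tsum_mul_right, ← lintegral_sum_measure,
            ← Measure.sum_apply _ MeasurableSet.univ, hsum]

end ParametrizedCoupling

section WeakLimits

open Filter Topology

lemma exists_subseq_tendsto_of_fst_snd_eq {A B : Type*} [TopologicalSpace A] [PolishSpace A]
    [MeasurableSpace A] [BorelSpace A] [TopologicalSpace B] [PolishSpace B] [MeasurableSpace B]
    [BorelSpace B] {μ : Measure A} {ν : Measure B} [IsFiniteMeasure μ] [IsFiniteMeasure ν]
    {Q : ℕ → ProbabilityMeasure (A × B)} (hfst : ∀ n, (Q n : Measure (A × B)).fst = μ)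
    (hsnd : ∀ n, (Q n : Measure (A × B)).snd = ν) :
    ∃ (R : ProbabilityMeasure (A × B)) (φ : ℕ → ℕ),
      StrictMono φ ∧ Tendsto (Q ∘ φ) atTop (𝓝 R) := by
  have htight : IsTightMeasureSet {x | ∃ π ∈ range Q, (π : Measure (A × B)) = x} := by
    refine .prodMk ((isTightMeasureSet_singleton (μ := μ)).subset ?_)
      ((isTightMeasureSet_singleton (μ := ν)).subset ?_)
    · rintro _ ⟨_, ⟨_, ⟨n, rfl⟩, rfl⟩, rfl⟩
      exact hfst n
    · rintro _ ⟨_, ⟨_, ⟨n, rfl⟩, rfl⟩, rfl⟩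
      exact hsnd n
  obtain ⟨R, -, φ, hφ, hR⟩ := (isCompact_closure_of_isTightMeasureSet htight).tendsto_subseq
    fun n => subset_closure (mem_range_self n)
  exact ⟨R, φ, hφ, hR⟩

variable {X Y : Type*} [TopologicalSpace X] [MeasurableSpace X]
  {Q : ℕ → ProbabilityMeasure X} {R : ProbabilityMeasure X}

lemma map_eq_of_tendsto_of_eventually_map_eq [OpensMeasurableSpace X] [TopologicalSpace Y]
    [MeasurableSpace Y] [BorelSpace Y] [HasOuterApproxClosed Y] (hlim : Tendsto Q atTop (𝓝 R))
    {g : X → Y} (hg : Continuous g) {θ : Measure Y}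
    (hθ : ∀ᶠ n in atTop, (Q n : Measure X).map g = θ) : (R : Measure X).map g = θ := by
  obtain ⟨n, hn⟩ := hθ.exists
  have hmap := ProbabilityMeasure.tendsto_map_of_tendsto_of_continuous Q R hlim hg
  have hconst : Tendsto (fun k => (Q k).map hg.measurable.aemeasurable) atTop
      (𝓝 ((Q n).map hg.measurable.aemeasurable)) :=
    tendsto_const_nhds.congr' (hθ.mono fun k hk => Subtype.ext (hn.trans hk.symm))
  rw [← hn]
  exact congrArg ProbabilityMeasure.toMeasure (tendsto_nhds_unique hmap hconst)

lemma lintegral_le_of_tendsto_of_eventually_le [OpensMeasurableSpace X] [HasOuterApproxClosed X]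
    (hlim : Tendsto Q atTop (𝓝 R)) {f : X → ℝ} (hf : Continuous f) (hf_nonneg : 0 ≤ f)
    {b : ℕ → ℝ≥0∞} {C : ℝ≥0∞} (hb : Tendsto b atTop (𝓝 C))
    (hle : ∀ᶠ n in atTop, ∫⁻ x, ENNReal.ofReal (f x) ∂Q n ≤ b n) :
    ∫⁻ x, ENNReal.ofReal (f x) ∂(R : Measure _) ≤ C := by
  rw [← hb.liminf_eq]
  exact (lintegral_le_liminf_lintegral_of_forall_isOpen_measure_le_liminf_measure hf hf_nonneg
    fun G hG => ProbabilityMeasure.le_liminf_measure_open_of_tendsto hlim hG).trans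
    (liminf_le_liminf hle)

end WeakLimits

section TowerLimit

open Filter Topology

lemma IsCouplingOver.comp {E S T T' : Type*} [MeasurableSpace E] [MeasurableSpace S]
    [MeasurableSpace T] [MeasurableSpace T'] {a : E → T} (ha : Measurable a) {f : T → T'}
    (hf : Measurable f) {ρ : Measure (E × S)} [IsFiniteMeasure ρ] {ν : Measure S} [SFinite ν]
    {Q : Measure ((E × S) × S)} (hQ : IsCouplingOver a ρ ν Q) :
    IsCouplingOver (f ∘ a) ρ ν Q where
  fst_eq := hQ.fst_eq
  map_eq_prod := by
    have hmap := congrArg (Measure.map (Prod.map f id)) hQ.map_eq_prod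
    rwa [Measure.map_map (by fun_prop) (by fun_prop), ← Measure.map_prod_map _ _ hf measurable_id,
      Measure.map_id, Measure.map_map hf ha] at hmap

lemma IsCouplingOver.isProbabilityMeasure {E S T : Type*} [MeasurableSpace E] [MeasurableSpace S]
    [MeasurableSpace T] {a : E → T} {ρ : Measure (E × S)} [IsProbabilityMeasure ρ] {ν : Measure S}
    {Q : Measure ((E × S) × S)} (hQ : IsCouplingOver a ρ ν Q) : IsProbabilityMeasure Q :=
  (Measure.isProbabilityMeasure_map_iff measurable_fst.aemeasurable).1
    (by rw [← Measure.fst, hQ.fst_eq]; infer_instance)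

lemma IsCouplingOver.snd_eq {E S T : Type*} [MeasurableSpace E] [MeasurableSpace S]
    [MeasurableSpace T] {a : E → T} (ha : Measurable a) {ρ : Measure (E × S)}
    [IsProbabilityMeasure ρ] {ν : Measure S} [SFinite ν] {Q : Measure ((E × S) × S)}
    (hQ : IsCouplingOver a ρ ν Q) : Q.snd = ν := by
  have := Measure.isProbabilityMeasure_map (μ := ρ.fst) ha.aemeasurable
  have hsnd := congrArg Measure.snd hQ.map_eq_prod
  rwa [Measure.snd_prod, Measure.snd, Measure.map_map (by fun_prop) (by fun_prop)] at hsnd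

variable {X : ℕ → Type*} [∀ n, MeasurableSpace (X n)] {S : Type*} [MeasurableSpace S]
  {ρ : Measure ((∀ n, X n) × S)} {ν : Measure S}

lemma IsCouplingOver.of_forall_restrict [IsFiniteMeasure ρ] [SigmaFinite ν]
    {Q : Measure (((∀ n, X n) × S) × S)}
    (hQ : ∀ s : Finset ℕ, IsCouplingOver s.restrict ρ ν Q) : IsCouplingOver id ρ ν Q where
  fst_eq := (hQ ∅).fst_eq
  map_eq_prod := by
    rw [Measure.map_id]
    symm
    refine Measure.prod_eq_generateFrom (C := measurableCylinders X)
      (D := {B | MeasurableSet B}) generateFrom_measurableCylinders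
      MeasurableSpace.generateFrom_measurableSet isPiSystem_measurableCylinders
      MeasurableSpace.isPiSystem_measurableSet
      ⟨fun _ => univ, fun _ => univ_mem_measurableCylinders _, fun _ => measure_lt_top _ _,
        iUnion_const _⟩ ν.toFiniteSpanningSetsIn fun A hA B hB => ?_
    obtain ⟨s, A', hA', rfl⟩ := (mem_measurableCylinders _).1 hA
    have hs : Measurable (s.restrict (π := X)) := by fun_prop
    have hrect := congrArg (fun θ => θ (A' ×ˢ B)) (hQ s).map_eq_prod
    rw [Measure.prod_prod, Measure.map_apply hs hA',
      Measure.map_apply (by fun_prop) (hA'.prod hB)] at hrect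
    have hcyl : MeasurableSet (cylinder s A') := hs hA'
    rw [Measure.map_apply (by fun_prop) (hcyl.prod hB)]
    exact hrect

lemma IsCouplingOver.of_tendsto {E T : Type*} [TopologicalSpace E]
    [MeasurableSpace E] [TopologicalSpace T] [MeasurableSpace T] [TopologicalSpace S]
    [OpensMeasurableSpace ((E × S) × S)] [BorelSpace (E × S)] [HasOuterApproxClosed (E × S)]
    [BorelSpace (T × S)] [HasOuterApproxClosed (T × S)]
    {a : E → T} (ha : Continuous a) {ρ : Measure (E × S)}
    {Q : ℕ → ProbabilityMeasure ((E × S) × S)} {R : ProbabilityMeasure ((E × S) × S)}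
    (hlim : Tendsto Q atTop (𝓝 R)) (hQ : ∀ᶠ n in atTop, IsCouplingOver a ρ ν (Q n)) :
    IsCouplingOver a ρ ν (R : Measure ((E × S) × S)) where
  fst_eq := map_eq_of_tendsto_of_eventually_map_eq hlim continuous_fst
    (hQ.mono fun _ h => h.fst_eq)
  map_eq_prod := map_eq_of_tendsto_of_eventually_map_eq hlim (by fun_prop)
    (hQ.mono fun _ h => h.map_eq_prod)

/- Prokhorov's theorem applies because all `Q n` have the same marginals. Each
`IsCouplingOver (s.restrict) ρ ν` holds eventually along the sequence and is a closed condition. -/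
theorem exists_isCouplingOver_id_of_forall_range [∀ n, TopologicalSpace (X n)]
    [∀ n, PolishSpace (X n)] [∀ n, BorelSpace (X n)] [TopologicalSpace S] [PolishSpace S]
    [BorelSpace S] [IsProbabilityMeasure ρ] [IsProbabilityMeasure ν]
    {Q : ℕ → Measure (((∀ n, X n) × S) × S)}
    (hQ : ∀ n, IsCouplingOver (Finset.range n).restrict ρ ν (Q n))
    {f : ℕ → ((∀ n, X n) × S) × S → ℝ} (hf : ∀ k, Continuous (f k)) (hf_nonneg : ∀ k, 0 ≤ f k)
    (hf_mono : Monotone f) {b : ℕ → ℝ≥0∞} {C : ℝ≥0∞} (hb : Tendsto b atTop (𝓝 C))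
    (hle : ∀ n, ∫⁻ p, ENNReal.ofReal (f n p) ∂Q n ≤ b n) :
    ∃ Q', IsCouplingOver id ρ ν Q' ∧ ∫⁻ p, ⨆ k, ENNReal.ofReal (f k p) ∂Q' ≤ C := by
  have hprob (n : ℕ) := (hQ n).isProbabilityMeasure
  obtain ⟨R, φ, hφ, hR⟩ := exists_subseq_tendsto_of_fst_snd_eq (Q := fun n => ⟨Q n, hprob n⟩)
    (fun n => (hQ n).fst_eq) (fun n => (hQ n).snd_eq (by fun_prop))
  refine ⟨R, .of_forall_restrict fun s => ?_, ?_⟩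
  · refine .of_tendsto (by fun_prop) hR ?_
    filter_upwards [eventually_ge_atTop (s.sup id + 1)] with n hn
    have hs : s ⊆ Finset.range (φ n) := fun i hi => Finset.mem_range.2
      ((Finset.le_sup (f := id) hi).trans_lt (hn.trans (hφ.id_le n)))
    rw [← Finset.restrict₂_comp_restrict hs]
    exact (hQ (φ n)).comp (by fun_prop) (by fun_prop)
  · rw [lintegral_iSup (fun k => (hf k).measurable.ennreal_ofReal)
      fun k l hkl p => ENNReal.ofReal_le_ofReal (hf_mono hkl p)]
    refine iSup_le fun k => lintegral_le_of_tendsto_of_eventually_le hR (hf k) (hf_nonneg k)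
      (hb.comp hφ.tendsto_atTop) ?_
    filter_upwards [eventually_ge_atTop k] with n hn
    exact (lintegral_mono fun p => ENNReal.ofReal_le_ofReal
      (hf_mono (hn.trans (hφ.id_le n)) p)).trans (hle (φ n))

end TowerLimit

section ChangeOfParameter

variable {E S T T' : Type*} [MeasurableSpace E] [MeasurableSpace S] [MeasurableSpace T]
  [MeasurableSpace T']

lemma isCouplingOver_map_iff {W : E → T} (hW : Measurable W) {b : T → T'} (hb : Measurable b)
    {ρ : Measure (E × S)} {ν : Measure S} {Q : Measure ((E × S) × S)} (hfst : Q.fst = ρ) :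
    IsCouplingOver b (ρ.map (Prod.map W id)) ν (Q.map (Prod.map (Prod.map W id) id)) ↔
      IsCouplingOver (b ∘ W) ρ ν Q := by
  have hlaw : (Q.map (Prod.map (Prod.map W id) id)).map (fun p => (b p.1.1, p.2)) =
      Q.map fun p => ((b ∘ W) p.1.1, p.2) :=
    Measure.map_map (by fun_prop) (by fun_prop)
  have hρ : (ρ.map (Prod.map W id)).fst.map b = ρ.fst.map (b ∘ W) := by
    simp_rw [Measure.fst]
    rw [Measure.map_map (by fun_prop) (by fun_prop), Measure.map_map (by fun_prop) (by fun_prop),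
      Measure.map_map (by fun_prop) (by fun_prop)]
    rfl
  refine ⟨fun h => ⟨hfst, ?_⟩, fun h => ⟨?_, ?_⟩⟩
  · rw [← hlaw, h.map_eq_prod, hρ]
  · rw [← hfst, Measure.fst, Measure.fst, Measure.map_map (by fun_prop) (by fun_prop),
      Measure.map_map (by fun_prop) (by fun_prop)]
    rfl
  · rw [hlaw, h.map_eq_prod, hρ]

lemma IsCouplingOver.exists_map_eq [StandardBorelSpace S] [Nonempty S] {W : E → T}
    (hW : Measurable W) {b : T → T'} (hb : Measurable b) {ρ : Measure (E × S)} [SFinite ρ]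
    {ν : Measure S} {R : Measure ((T × S) × S)} [IsFiniteMeasure R]
    (hR : IsCouplingOver b (ρ.map (Prod.map W id)) ν R) :
    ∃ Q, IsCouplingOver (b ∘ W) ρ ν Q ∧ Q.map (Prod.map (Prod.map W id) id) = R := by
  obtain ⟨η, _, hη⟩ :=
    exists_kernel_comap_compProd_map_eq ρ (hW.prodMap measurable_id) hR.fst_eq
  refine ⟨_, (isCouplingOver_map_iff hW hb (Measure.fst_compProd _ _)).1 ?_, hη⟩
  rwa [hη]

lemma IsCouplingOver.id_of_comap_eq {E : Type*} {mE : MeasurableSpace E} {W : E → T}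
    (hW : MeasurableSpace.comap W inferInstance = mE) {ρ : Measure (E × S)} [IsFiniteMeasure ρ]
    {ν : Measure S} [SigmaFinite ν] {Q : Measure ((E × S) × S)} (hQ : IsCouplingOver W ρ ν Q) :
    IsCouplingOver id ρ ν Q where
  fst_eq := hQ.fst_eq
  map_eq_prod := by
    have hWm : Measurable W := measurable_iff_comap_le.2 hW.le
    symm
    refine Measure.prod_eq fun A B hA hB => ?_
    obtain ⟨A', hA', rfl⟩ : MeasurableSet[MeasurableSpace.comap W inferInstance] A := hW ▸ hA
    have hrect := congrArg (fun θ => θ (A' ×ˢ B)) hQ.map_eq_prod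
    rw [Measure.prod_prod, Measure.map_apply hWm hA',
      Measure.map_apply (by fun_prop) (hA'.prod hB)] at hrect
    rw [Measure.map_id, Measure.map_apply (by fun_prop) (hA.prod hB)]
    exact hrect

variable {m : Measure E} [IsProbabilityMeasure m] {ν : Measure S} [IsProbabilityMeasure ν]

lemma isCouplingOver_id_compProd_iff [MeasurableSpace.CountablyGenerated S] {κ : Kernel E S}
    [IsMarkovKernel κ] {η : Kernel (E × S) S} [IsMarkovKernel η] :
    IsCouplingOver id (m ⊗ₘ κ) ν ((m ⊗ₘ κ) ⊗ₘ η) ↔ (κ ⊗ₖ η).snd =ᵐ[m] Kernel.const E ν := by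
  have hlaw : ((m ⊗ₘ κ) ⊗ₘ η).map (fun p => (id p.1.1, p.2)) = m ⊗ₘ (κ ⊗ₖ η).snd := by
    rw [Kernel.snd_eq, Measure.compProd_map measurable_snd, ← Measure.compProd_assoc',
      Measure.map_map (by fun_prop) (by fun_prop)]
    rfl
  have hprod : ((m ⊗ₘ κ).fst.map id).prod ν = m ⊗ₘ Kernel.const E ν := by
    rw [Measure.map_id, Measure.fst_compProd, Measure.compProd_const]
  refine ⟨fun h => Kernel.ae_eq_of_compProd_eq ?_, fun h => ⟨Measure.fst_compProd _ _, ?_⟩⟩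
  · rw [← hlaw, ← hprod, h.map_eq_prod]
  · rw [hprod, ← Measure.compProd_congr h, hlaw]

/- The second marginal of the lifted kernel depends on `e` only through `W e`. -/
lemma IsCouplingOver.exists_comap [StandardBorelSpace S] [Nonempty S] {W : E → T}
    (hW : Measurable W) {κ : Kernel T S} [IsMarkovKernel κ] {R : Measure ((T × S) × S)}
    (hR : IsCouplingOver id (m.map W ⊗ₘ κ) ν R) :
    ∃ Q, IsCouplingOver id (m ⊗ₘ κ.comap W hW) ν Q ∧
      Q.map (Prod.map (Prod.map W id) id) = R := by
  have := Measure.isProbabilityMeasure_map (μ := m) hW.aemeasurable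
  have := hR.isProbabilityMeasure
  have hρ := map_prodMap_compProd_comap m κ hW
  obtain ⟨η, _, hη⟩ := exists_kernel_comap_compProd_map_eq (m ⊗ₘ κ.comap W hW)
    (hW.prodMap measurable_id) (hR.fst_eq.trans hρ.symm)
  refine ⟨_, isCouplingOver_id_compProd_iff.2 ?_, hη⟩
  rw [← hη, map_prodMap_compProd_comap, hρ, isCouplingOver_id_compProd_iff] at hR
  filter_upwards [ae_of_ae_map hW.aemeasurable hR] with e he
  rw [Kernel.const_apply] at he ⊢
  rw [← he]
  ext B hB
  simp_rw [Kernel.snd_apply' _ _ hB]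
  rw [Kernel.compProd_apply (measurable_snd hB), Kernel.compProd_apply (measurable_snd hB)]
  rfl

end ChangeOfParameter

section Encoding

open MeasurableSpace

lemma comap_mapNatBool (α : Type*) [m : MeasurableSpace α] [CountablyGenerated α] :
    MeasurableSpace.comap (mapNatBool α) inferInstance = m := by
  classical
  refine (measurable_mapNatBool α).comap_le.antisymm ?_
  conv_lhs => rw [← generateFrom_natGeneratingSequence α]
  refine generateFrom_le ?_
  rintro _ ⟨n, rfl⟩
  refine ⟨{w | w n = true}, measurableSet_eq_fun (measurable_pi_apply n) measurable_const, ?_⟩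
  ext x
  simp [mapNatBool]

lemma comap_measure_eq_of_isPiSystem {S : Type*} [MeasurableSpace S] {C : Set (Set S)}
    (hgen : generateFrom C = ‹MeasurableSpace S›) (hpi : IsPiSystem C) :
    MeasurableSpace.comap (fun (μ : ProbabilityMeasure S) (A : C) => (μ : Measure S) A)
      MeasurableSpace.pi = (inferInstance : MeasurableSpace (ProbabilityMeasure S)) := by
  refine le_antisymm (Measurable.comap_le (measurable_pi_lambda _ fun A => ?_)) ?_
  · have hA : MeasurableSet (A : Set S) := by
      rw [← hgen]
      exact measurableSet_generateFrom A.2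
    exact (Measure.measurable_coe hA).comp measurable_subtype_coe
  · refine Measurable.comap_le (f := fun μ : ProbabilityMeasure S => (μ : Measure S)) ?_
    refine .measure_of_isPiSystem_of_isProbabilityMeasure hgen.symm hpi fun A hA => ?_
    exact (measurable_pi_apply (X := fun _ : C => ℝ≥0∞) ⟨A, hA⟩).comp (comap_measurable _)

/- A countable generating algebra is a π-system, and a probability measure is determined by its
values there. -/
instance countablyGenerated_probabilityMeasure (S : Type*) [MeasurableSpace S]
    [CountablyGenerated S] : CountablyGenerated (ProbabilityMeasure S) := by
  let C := generateSetAlgebra (countableGeneratingSet S)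
  have hC : C.Countable := countable_generateSetAlgebra countable_countableGeneratingSet
  have hgen : generateFrom C = ‹MeasurableSpace S› :=
    generateFrom_generateSetAlgebra_eq.trans generateFrom_countableGeneratingSet
  have hpi : IsPiSystem C := fun A hA B hB _ =>
    isSetAlgebra_generateSetAlgebra.inter_mem hA hB
  have := hC.to_subtype
  have hcomap := CountablyGenerated.comap
    fun (μ : ProbabilityMeasure S) (A : C) => (μ : Measure S) A
  rwa [comap_measure_eq_of_isPiSystem hgen hpi] at hcomap

end Encoding

section OptimalCoupling

open Filter Topology

variable {S : Type*} [TopologicalSpace S] [PolishSpace S] [MeasurableSpace S] [BorelSpace S]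
  [Nonempty S] {c : S → S → ℝ} {E : Type*} [MeasurableSpace E]

lemma exists_isCouplingOver_id_cantor (hstar : StarCond c) {W : E → ℕ → Bool}
    (hW : Measurable W) (m : Measure E) [IsProbabilityMeasure m] (κ : Kernel E S)
    [IsMarkovKernel κ] (ν : Measure S) [IsProbabilityMeasure ν] :
    ∃ Q, IsCouplingOver id ((m ⊗ₘ κ).map (Prod.map W id)) ν Q ∧
      ∫⁻ p, ENNReal.ofReal (c p.1.2 p.2) ∂Q ≤ ∫⁻ e, lipDist c (κ e) ν ∂m := by
  obtain ⟨v, hv, hlub⟩ := hstar.exists_seq_isLUB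
  have hcont (n : ℕ) : Continuous (truncate v n) := continuous_truncate hv n
  choose Q hQ hcost using fun n : ℕ => exists_isCouplingOver_of_countable
    (a := (Finset.range n).restrict ∘ W) (by fun_prop) hv n m κ ν
    (Nat.one_div_pos_of_nat (α := ℝ) (n := n))
  have hWm : Measurable (Prod.map W id : E × S → (ℕ → Bool) × S) := hW.prodMap measurable_id
  have := Measure.isProbabilityMeasure_map (μ := m ⊗ₘ κ) hWm.aemeasurable
  have hlim : Tendsto (fun n : ℕ => ∫⁻ e, lipDist c (κ e) ν ∂m + ENNReal.ofReal (1 / (n + 1)))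
      atTop (𝓝 (∫⁻ e, lipDist c (κ e) ν ∂m)) := by
    simpa using (ENNReal.tendsto_ofReal tendsto_one_div_add_atTop_nhds_zero_nat).const_add
      (∫⁻ e, lipDist c (κ e) ν ∂m)
  have hmono : Monotone fun (n : ℕ) (p : ((ℕ → Bool) × S) × S) =>
      dist (truncate v n p.1.2) (truncate v n p.2) := fun k n hkn p => by
    simpa only [edist_dist, ENNReal.ofReal_le_ofReal_iff dist_nonneg] using
      monotone_edist_truncate v p.1.2 p.2 hkn
  have hBool : ∀ _ : ℕ, PolishSpace Bool := fun _ => inferInstance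
  obtain ⟨R, hR, hRcost⟩ := exists_isCouplingOver_id_of_forall_range
    (fun n => (isCouplingOver_map_iff hW (by fun_prop) (hQ n).fst_eq).2 (hQ n))
    (by fun_prop) (fun _ _ => dist_nonneg) hmono hlim fun n => by
      rw [lintegral_map (by fun_prop) (by fun_prop)]
      simpa [edist_dist] using hcost n
  simp_rw [← edist_dist, iSup_edist_truncate hv (hlub _ _)] at hRcost
  exact ⟨R, hR, hRcost⟩

theorem exists_isCouplingOver_id_of_countablyGenerated [MeasurableSpace.CountablyGenerated E]
    (hstar : StarCond c) (m : Measure E) [IsProbabilityMeasure m] (κ : Kernel E S)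
    [IsMarkovKernel κ] (ν : Measure S) [IsProbabilityMeasure ν] :
    ∃ Q, IsCouplingOver id (m ⊗ₘ κ) ν Q ∧
      ∫⁻ p, ENNReal.ofReal (c p.1.2 p.2) ∂Q ≤ ∫⁻ e, lipDist c (κ e) ν ∂m := by
  have hW := MeasurableSpace.measurable_mapNatBool E
  obtain ⟨R, hR, hcost⟩ := exists_isCouplingOver_id_cantor hstar hW m κ ν
  have := Measure.isProbabilityMeasure_map (μ := m ⊗ₘ κ) (hW.prodMap measurable_id).aemeasurable
  have := hR.isProbabilityMeasure
  obtain ⟨Q, hQ, rfl⟩ := hR.exists_map_eq hW measurable_id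
  refine ⟨Q, hQ.id_of_comap_eq (comap_mapNatBool E), ?_⟩
  rwa [lintegral_map (hstar.measurable_ofReal_comp (by fun_prop) (by fun_prop))
    (by fun_prop)] at hcost

theorem exists_isCouplingOver_id (hstar : StarCond c) (m : Measure E) [IsProbabilityMeasure m]
    (κ : Kernel E S) [IsMarkovKernel κ] (ν : Measure S) [IsProbabilityMeasure ν] :
    ∃ Q, IsCouplingOver id (m ⊗ₘ κ) ν Q ∧
      ∫⁻ p, ENNReal.ofReal (c p.1.2 p.2) ∂Q ≤ ∫⁻ e, lipDist c (κ e) ν ∂m := by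
  let K : Kernel (ProbabilityMeasure S) S := ⟨Subtype.val, measurable_subtype_coe⟩
  have hK : IsMarkovKernel K := ⟨fun μ => μ.2⟩
  let W : E → ProbabilityMeasure S := fun e => ⟨κ e, inferInstance⟩
  have hW : Measurable W := κ.measurable.subtype_mk
  have := Measure.isProbabilityMeasure_map (μ := m) hW.aemeasurable
  obtain ⟨R, hR, hcost⟩ := exists_isCouplingOver_id_of_countablyGenerated hstar (m.map W) K ν
  obtain ⟨Q, hQ, rfl⟩ := hR.exists_comap hW
  refine ⟨Q, hQ, ?_⟩
  rw [lintegral_map (hstar.measurable_ofReal_comp (by fun_prop) (by fun_prop))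
    (by fun_prop)] at hcost
  exact hcost.trans (lintegral_map_le _ _)

lemma IsCouplingOver.lintegral_lipDist_le (hstar : StarCond c) {m : Measure E}
    [IsProbabilityMeasure m] {κ : Kernel E S} [IsMarkovKernel κ] {ν : Measure S}
    [IsProbabilityMeasure ν] {Q : Measure ((E × S) × S)}
    (hQ : IsCouplingOver id (m ⊗ₘ κ) ν Q) :
    ∫⁻ e, lipDist c (κ e) ν ∂m ≤ ∫⁻ p, ENNReal.ofReal (c p.1.2 p.2) ∂Q := by
  have := hQ.isProbabilityMeasure
  let η := Q.condKernel
  have hQη : (m ⊗ₘ κ) ⊗ₘ η = Q := by rw [← hQ.fst_eq, Q.disintegrate η]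
  have hsnd : (κ ⊗ₖ η).snd =ᵐ[m] Kernel.const E ν := by
    rwa [← isCouplingOver_id_compProd_iff, hQη]
  calc ∫⁻ e, lipDist c (κ e) ν ∂m
      ≤ ∫⁻ e, ∫⁻ p, ENNReal.ofReal (c p.1 p.2) ∂(κ ⊗ₖ η) e ∂m := by
        refine lintegral_mono_ae ?_
        filter_upwards [hsnd] with e he
        have hfst : ((κ ⊗ₖ η) e).fst = κ e := by
          rw [Measure.fst, ← Kernel.fst_apply, Kernel.fst_compProd]
        have hsnd : ((κ ⊗ₖ η) e).snd = ν := by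
          rw [Measure.snd, ← Kernel.snd_apply, he, Kernel.const_apply]
        simpa only [hfst, hsnd] using lipDist_fst_snd_le_lintegral c ((κ ⊗ₖ η) e)
    _ = ∫⁻ p, ENNReal.ofReal (c p.2.1 p.2.2) ∂(m ⊗ₘ (κ ⊗ₖ η)) :=
        (Measure.lintegral_compProd (f := fun p : E × S × S => ENNReal.ofReal (c p.2.1 p.2.2))
          (hstar.measurable_ofReal_comp (by fun_prop) (by fun_prop))).symm
    _ = ∫⁻ p, ENNReal.ofReal (c p.1.2 p.2) ∂Q := by
        rw [← Measure.compProd_assoc', hQη, lintegral_map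
          (hstar.measurable_ofReal_comp (by fun_prop) (by fun_prop)) (by fun_prop)]
        rfl

/- The coupling is lifted to `E` because `t ↦ lipDist c (κ t) ν`, a supremum over an uncountable
family, is not known to be measurable, so that the integral on the left need not be the one with
respect to `m.map W`. -/
lemma IsCouplingOver.lintegral_lipDist_comp_le {T : Type*} [MeasurableSpace T]
    (hstar : StarCond c) {m : Measure E} [IsProbabilityMeasure m] {W : E → T} (hW : Measurable W)
    {κ : Kernel T S} [IsMarkovKernel κ] {ν : Measure S} [IsProbabilityMeasure ν]
    {Q : Measure ((T × S) × S)} (hQ : IsCouplingOver id (m.map W ⊗ₘ κ) ν Q) :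
    ∫⁻ e, lipDist c (κ (W e)) ν ∂m ≤ ∫⁻ p, ENNReal.ofReal (c p.1.2 p.2) ∂Q := by
  obtain ⟨R, hR, rfl⟩ := hQ.exists_comap hW
  rw [lintegral_map (hstar.measurable_ofReal_comp (by fun_prop) (by fun_prop)) (by fun_prop)]
  exact hR.lintegral_lipDist_le hstar

theorem exists_isCouplingOver_id_lintegral_eq {T : Type*} [MeasurableSpace T]
    (hstar : StarCond c) (m : Measure E) [IsProbabilityMeasure m] {W : E → T} (hW : Measurable W)
    (κ : Kernel T S) [IsMarkovKernel κ] (ν : Measure S) [IsProbabilityMeasure ν] :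
    ∃ Q, IsCouplingOver id (m.map W ⊗ₘ κ) ν Q ∧
      ∫⁻ p, ENNReal.ofReal (c p.1.2 p.2) ∂Q = ∫⁻ e, lipDist c (κ (W e)) ν ∂m := by
  have := Measure.isProbabilityMeasure_map (μ := m) hW.aemeasurable
  obtain ⟨Q, hQ, hcost⟩ := exists_isCouplingOver_id hstar (m.map W) κ ν
  exact ⟨Q, hQ, (hcost.trans (lintegral_map_le _ _)).antisymm
    (hQ.lintegral_lipDist_comp_le hstar hW)⟩

end OptimalCoupling

section Realization

lemma map_projIcc_restrict_Icc :
    ((volume : Measure ℝ).restrict (Icc 0 1)).map (projIcc (0 : ℝ) 1 zero_le_one) = volume := by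
  have hval : volume.restrict (Icc (0 : ℝ) 1) = (volume : Measure unitInterval).map (↑) :=
    (map_comap_subtype_coe measurableSet_Icc volume).symm
  have hid : projIcc (0 : ℝ) 1 zero_le_one ∘ (↑) = (id : unitInterval → unitInterval) :=
    funext fun t => projIcc_val zero_le_one t
  rw [hval, Measure.map_map continuous_projIcc.measurable measurable_subtype_coe, hid,
    Measure.map_id]

variable {A E S Ω : Type*} [MeasurableSpace A] [mE : MeasurableSpace E] [MeasurableSpace S]
  [MeasurableSpace Ω]

lemma exists_measurable_map_restrict_Icc_eq [StandardBorelSpace S] [Nonempty S]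
    (η : Kernel A S) [IsMarkovKernel η] :
    ∃ F : A × ℝ → S, Measurable F ∧
      ∀ a, ((volume : Measure ℝ).restrict (Icc 0 1)).map (fun t => F (a, t)) = η a := by
  obtain ⟨f, hf, hfη⟩ := Kernel.exists_measurable_map_eq_unitInterval η
  have hproj : Measurable (projIcc (0 : ℝ) 1 zero_le_one) := continuous_projIcc.measurable
  refine ⟨fun p => f p.1 (projIcc 0 1 zero_le_one p.2), by fun_prop, fun a => ?_⟩
  rw [← hfη a, ← map_projIcc_restrict_Icc, Measure.map_map (by fun_prop) hproj]
  rfl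

variable {P : Measure Ω} {U : Ω → ℝ}

theorem exists_measurable_map_prodMk_eq [StandardBorelSpace S] [Nonempty S] [IsFiniteMeasure P]
    {Z : Ω → A} (hZ : Measurable Z) (hU : Measurable U)
    (hUunif : P.map U = volume.restrict (Icc 0 1)) (hind : IndepFun Z U P)
    {Q : Measure (A × S)} [IsFiniteMeasure Q] (hQ : Q.fst = P.map Z) :
    ∃ F : A × ℝ → S, Measurable F ∧ P.map (fun ω => (Z ω, F (Z ω, U ω))) = Q := by
  obtain ⟨F, hF, hFη⟩ := exists_measurable_map_restrict_Icc_eq Q.condKernel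
  have hjoint := (indepFun_iff_map_prod_eq_prod_map_map hZ.aemeasurable hU.aemeasurable).1 hind
  refine ⟨F, hF, ?_⟩
  calc P.map (fun ω => (Z ω, F (Z ω, U ω)))
      = (P.map fun ω => (Z ω, U ω)).map (fun p => (p.1, F p)) :=
        (Measure.map_map (g := fun p => (p.1, F p)) (by fun_prop) (hZ.prodMk hU)).symm
    _ = P.map Z ⊗ₘ Q.condKernel := by
        ext s hs
        rw [hjoint, Measure.map_apply (by fun_prop) hs, Measure.prod_apply (by measurability),
          Measure.compProd_apply hs]
        refine lintegral_congr fun a => ?_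
        rw [← hFη a, hUunif, Measure.map_apply (by fun_prop) (measurable_prodMk_left hs)]
        rfl
    _ = Q := by rw [← hQ, Q.disintegrate Q.condKernel]

lemma map_prodMk_eq_compProd [IsFiniteMeasure P] {Y : Ω → E} (hY : Measurable Y) {X : Ω → S}
    (hX : Measurable X) {κ : Kernel E S} [IsFiniteKernel κ]
    (h : ∀ A, MeasurableSet A → ∀ B, MeasurableSet B →
      P (Y ⁻¹' A ∩ X ⁻¹' B) = ∫⁻ ω in Y ⁻¹' A, κ (Y ω) B ∂P) :
    P.map (fun ω => (Y ω, X ω)) = P.map Y ⊗ₘ κ := by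
  refine Measure.ext_prod fun {A B} hA hB => ?_
  rw [Measure.map_apply (by fun_prop) (hA.prod hB), Measure.compProd_apply_prod hA hB,
    setLIntegral_map hA (Kernel.measurable_coe _ hB) hY]
  exact h A hA B hB

theorem exists_indepFun_map_eq_lintegral_eq [TopologicalSpace S] [PolishSpace S] [BorelSpace S]
    [Nonempty S] [IsProbabilityMeasure P] {c : S → S → ℝ} (hstar : StarCond c) {Y : Ω → E}
    (hY : Measurable Y) {X : Ω → S} (hX : Measurable X) (hU : Measurable U)
    (hUunif : P.map U = volume.restrict (Icc 0 1)) {κ : Kernel E S} [IsMarkovKernel κ]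
    (hκ : P.map (fun ω => (Y ω, X ω)) = P.map Y ⊗ₘ κ)
    (hind : IndepFun (fun ω => (Y ω, X ω)) U P) :
    ∃ F : (E × S) × ℝ → S, Measurable F ∧ IndepFun Y (fun ω => F ((Y ω, X ω), U ω)) P ∧
      P.map (fun ω => F ((Y ω, X ω), U ω)) = P.map X ∧
      ∫⁻ ω, ENNReal.ofReal (c (X ω) (F ((Y ω, X ω), U ω))) ∂P =
        ∫⁻ ω, lipDist c (κ (Y ω)) (P.map X) ∂P := by
  have := Measure.isProbabilityMeasure_map (μ := P) hY.aemeasurable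
  have := Measure.isProbabilityMeasure_map (μ := P) hX.aemeasurable
  obtain ⟨Q, hQ, hcost⟩ := exists_isCouplingOver_id_lintegral_eq hstar P hY κ (P.map X)
  have := hQ.isProbabilityMeasure
  obtain ⟨F, hF, hlaw⟩ := exists_measurable_map_prodMk_eq (hY.prodMk hX) hU hUunif hind
    (hQ.fst_eq.trans hκ.symm)
  have hjoint : P.map (fun ω => (Y ω, F ((Y ω, X ω), U ω))) = (P.map Y).prod (P.map X) := by
    have h := hQ.map_eq_prod
    rwa [← hlaw, Measure.map_map (by fun_prop) (by fun_prop), Measure.fst_compProd,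
      Measure.map_id] at h
  have hsnd : P.map (fun ω => F ((Y ω, X ω), U ω)) = P.map X := by
    rw [← Measure.snd_map_prodMk hY, hjoint, Measure.snd_prod]
  refine ⟨F, hF, ?_, hsnd, ?_⟩
  · rw [indepFun_iff_map_prod_eq_prod_map_map (by fun_prop) (by fun_prop), hjoint, hsnd]
  · rw [← hcost, ← hlaw, lintegral_map
      (hstar.measurable_ofReal_comp (by fun_prop) (by fun_prop)) (by fun_prop)]

theorem exists_indep_comap_map_eq_lintegral_eq [TopologicalSpace S] [PolishSpace S]
    [BorelSpace S] [IsProbabilityMeasure P] {c : S → S → ℝ} (hstar : StarCond c)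
    {Y : Ω → E} (hY : Measurable Y) {X : Ω → S} (hX : Measurable X) (hU : Measurable U)
    (hUunif : P.map U = volume.restrict (Icc 0 1))
    (hind : Indep (MeasurableSpace.comap U inferInstance)
      (MeasurableSpace.comap X inferInstance ⊔ MeasurableSpace.comap Y mE) P)
    {κ : E → Measure S} (hκ_prob : ∀ e, IsProbabilityMeasure (κ e))
    (hκ_meas : ∀ B, MeasurableSet B → Measurable fun e => κ e B)
    (hκ : ∀ A, MeasurableSet A → ∀ B, MeasurableSet B →
      P (Y ⁻¹' A ∩ X ⁻¹' B) = ∫⁻ ω in Y ⁻¹' A, κ (Y ω) B ∂P) :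
    ∃ X' : Ω → S,
      Measurable[MeasurableSpace.comap U inferInstance ⊔
        MeasurableSpace.comap X inferInstance ⊔ MeasurableSpace.comap Y mE] X' ∧
      Indep (MeasurableSpace.comap X' inferInstance) (MeasurableSpace.comap Y mE) P ∧
      P.map X' = P.map X ∧
      ∫⁻ ω, ENNReal.ofReal (c (X ω) (X' ω)) ∂P = ∫⁻ ω, lipDist c (κ (Y ω)) (P.map X) ∂P := by
  have : Nonempty S := P.nonempty_of_neZero.map X
  let K : Kernel E S := ⟨κ, Measure.measurable_of_measurable_coe _ hκ_meas⟩
  have : IsMarkovKernel K := ⟨hκ_prob⟩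
  have hindYX : IndepFun (fun ω => (Y ω, X ω)) U P := by
    rw [sup_comm, ← MeasurableSpace.comap_prodMk] at hind
    exact (IndepFun_iff_Indep _ _ _).2 hind.symm
  obtain ⟨F, hF, hFind, hFlaw, hFcost⟩ := exists_indepFun_map_eq_lintegral_eq hstar hY hX hU
    hUunif (κ := K) (map_prodMk_eq_compProd hY hX hκ) hindYX
  refine ⟨fun ω => F ((Y ω, X ω), U ω), ?_, (IndepFun_iff_Indep _ _ _).1 hFind.symm, hFlaw,
    hFcost⟩
  exact hF.comp (((Measurable.of_comap_le le_sup_right).prodMk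
    (.of_comap_le (le_sup_right.trans le_sup_left))).prodMk
      (.of_comap_le (le_sup_left.trans le_sup_left)))

end Realization

theorem reconstruction_property_general
    {S : Type*} [TopologicalSpace S] [PolishSpace S] [MeasurableSpace S] [BorelSpace S]
    {Ω : Type*} {mΩ : MeasurableSpace Ω} (P : Measure Ω) [IsProbabilityMeasure P]
    (c : S → S → ℝ) (hstar : StarCond c) (X : Ω → S) (hX : Measurable X)
    (U : Ω → ℝ) (hU : Measurable U) (hUunif : P.map U = volume.restrict (Icc 0 1))
    (M : MeasurableSpace Ω) (hM : M ≤ mΩ)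
    (hUindep : Indep (MeasurableSpace.comap U inferInstance)
      (MeasurableSpace.comap X inferInstance ⊔ M) P)
    (κX : Ω → Measure S) (hκX : IsRCD P M X κX) :
    ∃ Xstar : Ω → S,
      Measurable[MeasurableSpace.comap U inferInstance ⊔
        MeasurableSpace.comap X inferInstance ⊔ M] Xstar ∧
      Indep (MeasurableSpace.comap Xstar inferInstance) M P ∧
      law P Xstar = law P X ∧
      ∫⁻ ω, ENNReal.ofReal (c (X ω) (Xstar ω)) ∂P = tauC c P κX X := by
  rw [← MeasurableSpace.comap_id (m := M)] at hUindep ⊢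
  exact @exists_indep_comap_map_eq_lintegral_eq Ω S Ω M _ mΩ P U _ _ _ _ c hstar id
    (measurable_id'' hM) X hX hU hUunif hUindep κX hκX.1 hκX.2.1 hκX.2.2

/-- **Reconstruction (coupling) property**: if `Ω` is rich enough, there exists a
`σ(U) ∨ σ(X) ∨ ℳ`-measurable random variable `X*`, independent of `ℳ` and with the same
law as `X`, such that `E[c(X, X*)] = τ_c(ℳ, X)`. -/
theorem reconstruction_property
    {S : Type*} [TopologicalSpace S] [PolishSpace S] [MeasurableSpace S] [BorelSpace S]
    {Ω : Type*} [mΩ : MeasurableSpace Ω] (P : Measure Ω) [IsProbabilityMeasure P]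
    (c : S → S → ℝ) (hc0 : ∀ x y, 0 ≤ c x y) (hstar : StarCond c)
    (X : Ω → S) (hX : Measurable X)
    (x₀ : S) (hXint : ∫⁻ x, ENNReal.ofReal (c x x₀) ∂(P.map X) < ⊤)
    (U : Ω → ℝ) (hUmeas : Measurable U)
    (hUunif : P.map U = volume.restrict (Set.Icc (0:ℝ) 1))
    (M : MeasurableSpace Ω) (hM : M ≤ mΩ)
    (hUindep : Indep (MeasurableSpace.comap U inferInstance)
      (MeasurableSpace.comap X inferInstance ⊔ M) P)
    (κX : Ω → Measure S) (hκX : IsRCD P M X κX) :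
    ∃ Xstar : Ω → S,
      Measurable[MeasurableSpace.comap U inferInstance ⊔
        MeasurableSpace.comap X inferInstance ⊔ M] Xstar ∧
      Indep (MeasurableSpace.comap Xstar inferInstance) M P ∧
      law P Xstar = law P X ∧
      ∫⁻ ω, ENNReal.ofReal (c (X ω) (Xstar ω)) ∂P = tauC c P κX X :=
  reconstruction_property_general P c hstar X hX U hUmeas hUunif M hM hUindep κX hκX

end
end

section
/- Let S be a Polish space and c : S × S → [0,∞] a Borel measurable cost function. Then the equality KR_c(μ,ν) = ℓ_c(μ,ν) holds for all pairs of Borel probability measures (μ, ν) on S if and only if c satisfies condition (★), i.e. c(x,y) = sup_{u ∈ Lip_c} |u(x) − u(y)| for all x, y ∈ S. -/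
open MeasureTheory ProbabilityTheory ENNReal Set

noncomputable section

/-- `Lip_c` for an `[0,∞]`-valued cost: bounded continuous functions `u : S → ℝ` with
`|u x - u y| ≤ c x y`. -/
def LipCE {S : Type*} [TopologicalSpace S] (c : S → S → ℝ≥0∞) : Set (S → ℝ) :=
  {u | Continuous u ∧ (∃ M, ∀ x, |u x| ≤ M) ∧
    ∀ x y, ENNReal.ofReal |u x - u y| ≤ c x y}

open Function
open scoped NNReal CompactlySupported BoundedContinuousFunction

/-!
Testing the duality on Dirac masses, whose only coupling is a Dirac mass, gives (★). Conversely,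
under (★) the cost is the supremum of `|u x - u y|` over countably many `u ∈ Lip_c`, because the
square of `S` is hereditarily Lindelöf. These `u`, together with countably many separating Borel
sets, embed `S` measurably into a compact metrizable space on which every finite subfamily of the
`u` induces a continuous pseudometric. On the compact space, Hahn–Banach and Riesz–Markov applied to
a cone of continuous functions yield a coupling whose cost is at most `ℓ_c`, as soon as no dual pair
`(f, g)` for such a pseudometric exceeds `ℓ_c`; replacing `f` by an infimal convolution reduces this
to a single Lipschitz function. Its pullback to `S` is continuous, as it is dominated by finitely
many `u`, hence lies in `Lip_c`. The coupling is finally pulled back along the embedding.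
-/

section CompactSpace

variable {Z : Type*} [TopologicalSpace Z] [CompactSpace Z]

lemma integrable_continuousMap [MeasurableSpace Z] [OpensMeasurableSpace Z] (μ : Measure Z)
    [IsFiniteMeasure μ] (f : C(Z, ℝ)) : Integrable f μ :=
  f.continuous.integrable_of_hasCompactSupport (.of_compactSpace f)

lemma exists_linearMap_nonneg_on_cone (s : PointedCone ℝ C(Z, ℝ)) (hs : ∀ h, 0 ≤ h → h ∈ s)
    (hconst : ∀ a : ℝ, ContinuousMap.const Z a ∈ s → 0 ≤ a) :
    ∃ Λ : C(Z, ℝ) →ₗ[ℝ] ℝ, Λ 1 = 1 ∧ ∀ h ∈ s, 0 ≤ Λ h := by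
  have : Nonempty Z := by
    by_contra! hempty
    linarith [hconst (-1) (hs _ fun z => isEmptyElim z)]
  let mean : C(Z, ℝ) →ₗ.[ℝ] ℝ := .mkSpanSingleton 1 1 one_ne_zero
  have hmean_nonneg (h : mean.domain) (hmem : (h : C(Z, ℝ)) ∈ s) : 0 ≤ mean h := by
    obtain ⟨h, hh⟩ := h
    obtain ⟨a, rfl⟩ := Submodule.mem_span_singleton.1 hh
    have ha : mean ⟨a • 1, hh⟩ = a := by
      simp only [mean, LinearPMap.mkSpanSingleton'_apply, RingHom.id_apply, smul_eq_mul, mul_one]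
    rw [ha]
    exact hconst a (by convert! hmem; ext; simp)
  have hdense (h : C(Z, ℝ)) : ∃ k : mean.domain, (k : C(Z, ℝ)) + h ∈ s := by
    refine ⟨⟨‖h‖ • 1, Submodule.mem_span_singleton.2 ⟨_, rfl⟩⟩, hs _ fun z => ?_⟩
    simpa [add_comm] using neg_le_iff_add_nonneg.1 (h.neg_norm_le_apply z)
  obtain ⟨Λ, hΛ, hΛs⟩ := riesz_extension s mean hmean_nonneg hdense
  exact ⟨Λ, (hΛ ⟨1, _⟩).trans (LinearPMap.mkSpanSingleton_apply ℝ ℝ one_ne_zero 1), hΛs⟩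

variable [T2Space Z] [MeasurableSpace Z] [BorelSpace Z]

lemma exists_isFiniteMeasure_integral_eq (Λ : C(Z, ℝ) →ₗ[ℝ] ℝ) (hΛ : ∀ h, 0 ≤ h → 0 ≤ Λ h) :
    ∃ π : Measure Z, IsFiniteMeasure π ∧ ∀ h : C(Z, ℝ), ∫ z, h z ∂π = Λ h := by
  let Λc : C_c(Z, ℝ) →ₚ[ℝ] ℝ := .mk₀
    { toFun h := Λ h.toContinuousMap
      map_add' h k := map_add Λ h.toContinuousMap k.toContinuousMap
      map_smul' a h := map_smul Λ a h.toContinuousMap } fun h hh => hΛ h.toContinuousMap hh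
  exact ⟨RealRMK.rieszMeasure Λc, inferInstance, fun h =>
    RealRMK.integral_rieszMeasure Λc (CompactlySupportedContinuousMap.continuousMapEquiv h)⟩

lemma exists_isProbabilityMeasure_integral_nonneg_on_cone (s : PointedCone ℝ C(Z, ℝ))
    (hs : ∀ h, 0 ≤ h → h ∈ s) (hconst : ∀ a : ℝ, ContinuousMap.const Z a ∈ s → 0 ≤ a) :
    ∃ π : Measure Z, IsProbabilityMeasure π ∧ ∀ h ∈ s, 0 ≤ ∫ z, h z ∂π := by
  obtain ⟨Λ, hΛ_one, hΛs⟩ := exists_linearMap_nonneg_on_cone s hs hconst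
  obtain ⟨π, _, hπ⟩ := exists_isFiniteMeasure_integral_eq Λ fun h hh => hΛs h (hs h hh)
  have hreal : π.real univ = 1 := by simpa [hΛ_one] using hπ 1
  exact ⟨π, isProbabilityMeasure_iff_real.2 hreal, fun h hh => (hΛs h hh).trans_eq (hπ h).symm⟩

end CompactSpace

lemma map_eq_of_forall_integral_le {Z Y : Type*} [MeasurableSpace Z] [TopologicalSpace Y]
    [HasOuterApproxClosed Y] [MeasurableSpace Y] [BorelSpace Y] {π : Measure Z} {ν : Measure Y}
    [IsFiniteMeasure π] [IsFiniteMeasure ν] {e : Z → Y} (he : AEMeasurable e π)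
    (h : ∀ f : Y →ᵇ ℝ, ∫ y, f y ∂ν ≤ ∫ z, f (e z) ∂π) : π.map e = ν := by
  refine ext_of_forall_integral_eq_of_IsFiniteMeasure fun f => ?_
  rw [integral_map he f.continuous.aestronglyMeasurable]
  refine le_antisymm (neg_le_neg_iff.1 ?_) (h f)
  simpa [integral_neg] using h (-f)

section Kantorovich

variable {X Y ι : Type*} [TopologicalSpace X] [CompactSpace X] [MeasurableSpace X]
  [TopologicalSpace Y] [CompactSpace Y] [MeasurableSpace Y]

section OpensMeasurableSpace

variable [OpensMeasurableSpace X] [OpensMeasurableSpace Y] {μ : Measure X} {ν : Measure Y}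

lemma integral_add_integral_nonpos [IsProbabilityMeasure μ] [IsProbabilityMeasure ν]
    {f : C(X, ℝ)} {g : C(Y, ℝ)} (h : ∀ x y, f x + g y ≤ 0) :
    ∫ x, f x ∂μ + ∫ y, g y ∂ν ≤ 0 := by
  have hf := (integrable_continuousMap μ f).comp_fst ν
  have hg := (integrable_continuousMap ν g).comp_snd μ
  calc ∫ x, f x ∂μ + ∫ y, g y ∂ν
      = ∫ p, (f p.1 + g p.2) ∂μ.prod ν := by
        rw [integral_add hf hg, integral_fun_fst, integral_fun_snd]
        simp
    _ ≤ 0 := integral_nonpos fun p => h p.1 p.2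

/-- The cone of functions on `X × Y` dominating some `f ⊕ g - t • c i` with `0 ≤ t` and
`t * L ≤ ∫ f ∂μ + ∫ g ∂ν`, to which Hahn–Banach is applied in Kantorovich duality.
A probability measure whose integral is nonnegative on this cone is exactly a coupling of `μ` and
`ν` under which every `c i` has integral at most `L`. -/
def kantorovichCone (μ : Measure X) (ν : Measure Y) [IsFiniteMeasure μ] [IsFiniteMeasure ν]
    [Nonempty ι] {c : ι → C(X × Y, ℝ≥0)} (hc : Directed (· ≤ ·) c) (L : ℝ≥0) :
    PointedCone ℝ C(X × Y, ℝ) where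
  carrier := {h | ∃ (f : C(X, ℝ)) (g : C(Y, ℝ)) (i : ι) (t : ℝ≥0),
    (∀ x y, f x + g y ≤ h (x, y) + t * c i (x, y)) ∧ t * L ≤ ∫ x, f x ∂μ + ∫ y, g y ∂ν}
  zero_mem' := ⟨0, 0, Classical.arbitrary ι, 0, by simp, by simp⟩
  add_mem' := by
    rintro h h' ⟨f, g, i, t, hle, hint⟩ ⟨f', g', i', t', hle', hint'⟩
    obtain ⟨j, hij, hij'⟩ := hc i i'
    refine ⟨f + f', g + g', j, t + t', fun x y => ?_, ?_⟩
    · have hcj : t * c i (x, y) + t' * c i' (x, y) ≤ (t + t') * c j (x, y) := by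
        rw [add_mul]
        gcongr
        exacts [hij (x, y), hij' (x, y)]
      have hcj' : (t * c i (x, y) + t' * c i' (x, y) : ℝ) ≤ (t + t') * c j (x, y) :=
        mod_cast hcj
      simp only [ContinuousMap.add_apply, NNReal.coe_add]
      linarith [hle x y, hle' x y, hcj']
    · simp only [ContinuousMap.add_apply, NNReal.coe_add]
      rw [integral_add (integrable_continuousMap μ f) (integrable_continuousMap μ f'),
        integral_add (integrable_continuousMap ν g) (integrable_continuousMap ν g')]
      linarith
  smul_mem' := by
    rintro (a : ℝ≥0) h ⟨f, g, i, t, hle, hint⟩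
    refine ⟨a • f, a • g, i, a * t, fun x y => ?_, ?_⟩
    · have := mul_le_mul_of_nonneg_left (hle x y) a.2
      change a * f x + a * g y ≤ a * h (x, y) + ↑(a * t) * c i (x, y)
      rwa [NNReal.coe_mul, mul_assoc, ← mul_add, ← mul_add]
    · have := mul_le_mul_of_nonneg_left hint a.2
      simpa [mul_add, mul_assoc, NNReal.smul_def, integral_const_mul] using this

section kantorovichCone

variable [Nonempty ι] {c : ι → C(X × Y, ℝ≥0)} {hc : Directed (· ≤ ·) c} {L : ℝ≥0}

lemma const_sub_mem_kantorovichCone [IsProbabilityMeasure μ] [IsFiniteMeasure ν] (i : ι) :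
    ContinuousMap.const (X × Y) (L : ℝ) - (ContinuousMap.mk NNReal.toReal).comp (c i)
      ∈ kantorovichCone μ ν hc L :=
  ⟨.const X L, 0, i, 1, by simp, by simp⟩

lemma comp_fst_add_comp_snd_mem_kantorovichCone [IsFiniteMeasure μ] [IsFiniteMeasure ν]
    {f : C(X, ℝ)} {g : C(Y, ℝ)} (h : 0 ≤ ∫ x, f x ∂μ + ∫ y, g y ∂ν) :
    f.comp .fst + g.comp .snd ∈ kantorovichCone μ ν hc L :=
  ⟨f, g, Classical.arbitrary ι, 0, by simp, by simpa⟩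

lemma mem_kantorovichCone_of_nonneg [IsFiniteMeasure μ] [IsFiniteMeasure ν] {h : C(X × Y, ℝ)}
    (hh : 0 ≤ h) : h ∈ kantorovichCone μ ν hc L :=
  ⟨0, 0, Classical.arbitrary ι, 0, by simpa using fun x y => hh (x, y), by simp⟩

lemma nonneg_of_const_mem_kantorovichCone [IsProbabilityMeasure μ] [IsProbabilityMeasure ν]
    (hL : ∀ (i : ι) (f : C(X, ℝ)) (g : C(Y, ℝ)), (∀ x y, f x + g y ≤ c i (x, y)) →
      ∫ x, f x ∂μ + ∫ y, g y ∂ν ≤ L) {a : ℝ}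
    (ha : ContinuousMap.const (X × Y) a ∈ kantorovichCone μ ν hc L) : 0 ≤ a := by
  obtain ⟨f, g, i, t, hle, hint⟩ := ha
  have hshift : ∫ x, (f - ContinuousMap.const X a) x ∂μ = ∫ x, f x ∂μ - a := by
    simp [integral_sub (integrable_continuousMap μ f) (integrable_const a)]
  simp only [ContinuousMap.const_apply] at hle
  suffices ∫ x, (f - ContinuousMap.const X a) x ∂μ + ∫ y, g y ∂ν ≤ t * L by linarith
  rcases eq_zero_or_pos t with rfl | ht
  · simp only [NNReal.coe_zero, zero_mul] at hle ⊢
    refine integral_add_integral_nonpos fun x y => ?_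
    simp only [ContinuousMap.sub_apply, ContinuousMap.const_apply]
    linarith [hle x y]
  · have htr : (0 : ℝ) < t := ht
    have := hL i ((t : ℝ)⁻¹ • (f - .const X a)) ((t : ℝ)⁻¹ • g) fun x y => by
      simp only [ContinuousMap.smul_apply, ContinuousMap.sub_apply, ContinuousMap.const_apply,
        ← smul_add]
      rw [smul_eq_mul, inv_mul_le_iff₀ htr]
      linarith [hle x y]
    simp only [ContinuousMap.smul_apply, integral_smul, ← smul_add] at this
    rwa [smul_eq_mul, inv_mul_le_iff₀ htr] at this

end kantorovichCone

end OpensMeasurableSpace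

variable [T2Space X] [SecondCountableTopology X] [BorelSpace X]
  [T2Space Y] [SecondCountableTopology Y] [BorelSpace Y]

theorem exists_map_eq_lintegral_iSup_le [Nonempty ι] [Countable ι] {c : ι → C(X × Y, ℝ≥0)}
    (hc : Directed (· ≤ ·) c) (μ : Measure X) (ν : Measure Y) [IsProbabilityMeasure μ]
    [IsProbabilityMeasure ν] {L : ℝ≥0}
    (hL : ∀ (i : ι) (f : C(X, ℝ)) (g : C(Y, ℝ)), (∀ x y, f x + g y ≤ c i (x, y)) →
      ∫ x, f x ∂μ + ∫ y, g y ∂ν ≤ L) :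
    ∃ π : Measure (X × Y), π.map Prod.fst = μ ∧ π.map Prod.snd = ν ∧
      ∫⁻ p, ⨆ i, (c i p : ℝ≥0∞) ∂π ≤ L := by
  obtain ⟨π, hprob, hπ⟩ := exists_isProbabilityMeasure_integral_nonneg_on_cone
    (kantorovichCone μ ν hc L) (fun _ => mem_kantorovichCone_of_nonneg)
    fun _ => nonneg_of_const_mem_kantorovichCone hL
  have hmarginal (f : C(X, ℝ)) (g : C(Y, ℝ)) (h : 0 ≤ ∫ x, f x ∂μ + ∫ y, g y ∂ν) :
      0 ≤ ∫ p, f p.1 ∂π + ∫ p, g p.2 ∂π := by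
    have hf : Integrable (fun p => f p.1) π := integrable_continuousMap π (f.comp .fst)
    have hg : Integrable (fun p => g p.2) π := integrable_continuousMap π (g.comp .snd)
    rw [← integral_add hf hg]
    exact hπ _ (comp_fst_add_comp_snd_mem_kantorovichCone h)
  have hcost (i : ι) : ∫⁻ p, c i p ∂π ≤ L := by
    have hint : Integrable (fun p => (c i p : ℝ)) π :=
      integrable_continuousMap π ((ContinuousMap.mk NNReal.toReal).comp (c i))
    have hsub : 0 ≤ ∫ p, (L - c i p : ℝ) ∂π := hπ _ (const_sub_mem_kantorovichCone i)
    rw [lintegral_coe_eq_integral _ hint]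
    rw [integral_sub (integrable_const _) hint] at hsub
    simpa using hsub
  refine ⟨π, map_eq_of_forall_integral_le (by fun_prop) fun f => ?_,
    map_eq_of_forall_integral_le (by fun_prop) fun g => ?_, ?_⟩
  · simpa using hmarginal f.toContinuousMap (.const Y (-∫ x, f x ∂μ)) (by simp)
  · simpa using hmarginal (.const X (-∫ y, g y ∂ν)) g.toContinuousMap (by simp)
  · rw [lintegral_iSup_directed (fun i => by fun_prop) fun i j => ?_]
    · exact iSup_le hcost
    · obtain ⟨k, hik, hjk⟩ := hc i j
      exact ⟨k, fun p => ENNReal.coe_le_coe.2 (hik p), fun p => ENNReal.coe_le_coe.2 (hjk p)⟩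

end Kantorovich

lemma exists_dist_le_dist_of_add_le {X E : Type*} [PseudoMetricSpace E] {Φ : X → E} {f g : X → ℝ}
    (h : ∀ x y, f x + g y ≤ dist (Φ x) (Φ y)) :
    ∃ φ : X → ℝ, (∀ x y, dist (φ x) (φ y) ≤ dist (Φ x) (Φ y)) ∧ (∀ x, f x ≤ φ x) ∧
      ∀ x, φ x ≤ -g x := by
  let φ x := ⨅ y, (dist (Φ x) (Φ y) - g y)
  have hbdd x : BddBelow (range fun y => dist (Φ x) (Φ y) - g y) :=
    ⟨f x, forall_mem_range.2 fun y => le_sub_iff_add_le.2 (h x y)⟩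
  have hφ_le x y : φ x ≤ dist (Φ x) (Φ y) - g y := ciInf_le (hbdd x) y
  have hφ_sub x x' : φ x - φ x' ≤ dist (Φ x) (Φ x') := by
    have : Nonempty X := ⟨x⟩
    rw [sub_le_comm]
    refine le_ciInf fun y => ?_
    linarith [hφ_le x y, dist_triangle (Φ x) (Φ x') (Φ y)]
  refine ⟨φ, fun x x' => abs_sub_le_iff.2 ⟨hφ_sub x x', ?_⟩, fun x => ?_, fun x => ?_⟩
  · exact (hφ_sub x' x).trans_eq (dist_comm _ _)
  · have : Nonempty X := ⟨x⟩
    exact le_ciInf fun y => le_sub_iff_add_le.2 (h x y)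
  · simpa using hφ_le x x

lemma continuous_of_dist_le_dist {X E F : Type*} [TopologicalSpace X] [PseudoMetricSpace E]
    [PseudoMetricSpace F] {Φ : X → E} {φ : X → F} (hΦ : Continuous Φ)
    (h : ∀ x y, dist (φ x) (φ y) ≤ dist (Φ x) (Φ y)) : Continuous φ :=
  continuous_iff_continuousAt.2 fun x => tendsto_iff_dist_tendsto_zero.2 <|
    squeeze_zero (fun _ => dist_nonneg) (fun y => h y x)
      (tendsto_iff_dist_tendsto_zero.1 hΦ.continuousAt)

section Couplings

lemma exists_map_prodMap_eq {α β α' β' : Type*} [MeasurableSpace α] [MeasurableSpace β]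
    [MeasurableSpace α'] [MeasurableSpace β'] {i : α → α'} {j : β → β'}
    (hi : MeasurableEmbedding i) (hj : MeasurableEmbedding j) {μ : Measure α} {ν : Measure β}
    {π' : Measure (α' × β')} (hfst : π'.map Prod.fst = μ.map i) (hsnd : π'.map Prod.snd = ν.map j) :
    ∃ π : Measure (α × β), π.map Prod.fst = μ ∧ π.map Prod.snd = ν ∧
      π.map (Prod.map i j) = π' := by
  have hij : MeasurableEmbedding (Prod.map i j) := hi.prodMap hj
  have hrange_fst : ∀ᵐ p ∂π', p.1 ∈ range i := by
    refine ae_of_ae_map measurable_fst.aemeasurable ?_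
    rw [hfst, hi.ae_map_iff]
    exact ae_of_all _ mem_range_self
  have hrange_snd : ∀ᵐ p ∂π', p.2 ∈ range j := by
    refine ae_of_ae_map measurable_snd.aemeasurable ?_
    rw [hsnd, hj.ae_map_iff]
    exact ae_of_all _ mem_range_self
  have hmap : (π'.comap (Prod.map i j)).map (Prod.map i j) = π' := by
    rw [hij.map_comap, range_prodMap]
    refine Measure.restrict_eq_self_of_ae_mem ?_
    filter_upwards [hrange_fst, hrange_snd] with p hp₁ hp₂ using ⟨hp₁, hp₂⟩
  have hfst_map (π : Measure (α × β)) :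
      (π.map (Prod.map i j)).map Prod.fst = (π.map Prod.fst).map i := by
    rw [Measure.map_map measurable_fst hij.measurable, Measure.map_map hi.measurable measurable_fst]
    rfl
  have hsnd_map (π : Measure (α × β)) :
      (π.map (Prod.map i j)).map Prod.snd = (π.map Prod.snd).map j := by
    rw [Measure.map_map measurable_snd hij.measurable, Measure.map_map hj.measurable measurable_snd]
    rfl
  obtain ⟨π, rfl⟩ : ∃ π : Measure (α × β), π.map (Prod.map i j) = π' := ⟨_, hmap⟩
  refine ⟨π, ?_, ?_, rfl⟩
  · rw [← hi.comap_map μ, ← hfst, hfst_map, hi.comap_map]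
  · rw [← hj.comap_map ν, ← hsnd, hsnd_map, hj.comap_map]

lemma lintegral_of_mem_couplings_dirac {S : Type*} [MeasurableSpace S]
    [MeasurableSingletonClass S] (c : S → S → ℝ≥0∞) {x y : S} {π : Measure (S × S)}
    (hπ : π ∈ Couplings (.dirac x) (.dirac y)) : ∫⁻ p, c p.1 p.2 ∂π = c x y := by
  obtain ⟨hprob, hfst, hsnd⟩ := hπ
  have hx : ∀ᵐ p ∂π, p.1 = x := by
    refine ae_of_ae_map (p := (· = x)) measurable_fst.aemeasurable ?_
    simp [hfst, ae_dirac_eq]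
  have hy : ∀ᵐ p ∂π, p.2 = y := by
    refine ae_of_ae_map (p := (· = y)) measurable_snd.aemeasurable ?_
    simp [hsnd, ae_dirac_eq]
  calc ∫⁻ p, c p.1 p.2 ∂π = ∫⁻ _, c x y ∂π := lintegral_congr_ae (by
        filter_upwards [hx, hy] with p hpx hpy
        rw [hpx, hpy])
    _ = c x y := by simp

lemma dirac_mem_couplings {S : Type*} [MeasurableSpace S] (x y : S) :
    .dirac (x, y) ∈ Couplings (Measure.dirac x) (Measure.dirac y) :=
  ⟨inferInstance, Measure.map_dirac' measurable_fst _, Measure.map_dirac' measurable_snd _⟩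

lemma iInf_couplings_dirac {S : Type*} [MeasurableSpace S] [MeasurableSingletonClass S]
    (c : S → S → ℝ≥0∞) (x y : S) :
    ⨅ π ∈ Couplings (.dirac x) (.dirac y), ∫⁻ p, c p.1 p.2 ∂π = c x y :=
  le_antisymm
    ((iInf₂_le _ (dirac_mem_couplings x y)).trans_eq
      (lintegral_of_mem_couplings_dirac c (dirac_mem_couplings x y)))
    (le_iInf₂ fun _ hπ => (lintegral_of_mem_couplings_dirac c hπ).ge)

end Couplings

lemma mem_LipCE {S : Type*} [TopologicalSpace S] {c : S → S → ℝ≥0∞} {u : S → ℝ} :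
    u ∈ LipCE c ↔ Continuous u ∧ (∃ M, ∀ x, |u x| ≤ M) ∧ ∀ x y, edist (u x) (u y) ≤ c x y := by
  simp only [LipCE, mem_ofPred_eq, edist_dist, Real.dist_eq]

lemma edist_integral_le_lintegral {S : Type*} [TopologicalSpace S] [MeasurableSpace S]
    [OpensMeasurableSpace S] {c : S → S → ℝ≥0∞} {u : S → ℝ} (hu : u ∈ LipCE c) {μ ν : Measure S}
    {π : Measure (S × S)} (hπ : π ∈ Couplings μ ν) :
    edist (∫ x, u x ∂μ) (∫ x, u x ∂ν) ≤ ∫⁻ p, c p.1 p.2 ∂π := by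
  obtain ⟨hprob, rfl, rfl⟩ := hπ
  obtain ⟨hcont, ⟨M, hM⟩, hle⟩ := mem_LipCE.1 hu
  have hmeas : StronglyMeasurable u := hcont.measurable.stronglyMeasurable
  have hint {f : S × S → S} (hf : Measurable f) : Integrable (fun p => u (f p)) π :=
    .of_bound (hmeas.comp_measurable hf).aestronglyMeasurable M (ae_of_all _ fun p => hM (f p))
  calc edist (∫ x, u x ∂π.map Prod.fst) (∫ x, u x ∂π.map Prod.snd)
      = ‖∫ p, (u p.1 - u p.2) ∂π‖ₑ := by
        rw [integral_map_of_stronglyMeasurable measurable_fst hmeas,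
          integral_map_of_stronglyMeasurable measurable_snd hmeas, edist_eq_enorm_sub,
          integral_sub (hint measurable_fst) (hint measurable_snd)]
    _ ≤ ∫⁻ p, ‖u p.1 - u p.2‖ₑ ∂π := enorm_integral_le_lintegral_enorm _
    _ ≤ ∫⁻ p, c p.1 p.2 ∂π := lintegral_mono fun p => by
        rw [← edist_eq_enorm_sub]
        exact hle p.1 p.2

lemma exists_countable_subset_LipCE {S : Type*} [TopologicalSpace S]
    [HereditarilyLindelofSpace (S × S)] {c : S → S → ℝ≥0∞}
    (hc : ∀ x y, c x y = ⨆ u ∈ LipCE c, edist (u x) (u y)) :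
    ∃ A ⊆ LipCE c, A.Countable ∧ ∀ x y, c x y = ⨆ u : A, edist (u.1 x) (u.1 y) := by
  let variation (u : S → ℝ) (p : S × S) : ℝ≥0∞ := edist (u p.1) (u p.2)
  have hlsc : ∀ f ∈ variation '' LipCE c, LowerSemicontinuous f :=
    forall_mem_image.2 fun u hu => by
      have := (mem_LipCE.1 hu).1
      exact Continuous.lowerSemicontinuous (by fun_prop)
  have hlub : IsLUB (variation '' LipCE c) (uncurry c) := by
    have : uncurry c = ⨆ u ∈ LipCE c, variation u := by
      ext p
      simp only [iSup_apply, variation, ← hc, uncurry]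
    exact this ▸ isLUB_biSup
  obtain ⟨F, hFsub, hFcount, hF⟩ := exists_countable_lowerSemicontinuous_isLUB hlsc hlub
  obtain ⟨A, hA, hbij⟩ := SurjOn.exists_bijOn_subset hFsub
  refine ⟨A, hA, hbij.mapsTo.countable_of_injOn hbij.injOn hFcount, fun x y => ?_⟩
  rw [← hbij.image_eq] at hF
  have hsup : uncurry c = ⨆ u ∈ A, variation u := hF.unique isLUB_biSup
  simpa only [iSup_apply, iSup_subtype', uncurry, variation] using congr_fun hsup (x, y)

lemma exists_map_eq_lintegral_iSup_edist_le {K ι : Type*} [TopologicalSpace K] [CompactSpace K]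
    [T2Space K] [SecondCountableTopology K] [MeasurableSpace K] [BorelSpace K] [Nonempty ι]
    [Countable ι] {E : ι → Type*} [∀ i, PseudoMetricSpace (E i)] (Φ : ∀ i, C(K, E i))
    (hΦ : Directed (· ≤ ·) fun i (p : K × K) => nndist (Φ i p.1) (Φ i p.2))
    (μ ν : Measure K) [IsProbabilityMeasure μ] [IsProbabilityMeasure ν] {L : ℝ≥0}
    (hL : ∀ (i : ι) (φ : C(K, ℝ)), (∀ x y, dist (φ x) (φ y) ≤ dist (Φ i x) (Φ i y)) →
      ∫ x, φ x ∂μ - ∫ x, φ x ∂ν ≤ L) :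
    ∃ π : Measure (K × K), π.map Prod.fst = μ ∧ π.map Prod.snd = ν ∧
      ∫⁻ p, ⨆ i, edist (Φ i p.1) (Φ i p.2) ∂π ≤ L := by
  let c (i : ι) : C(K × K, ℝ≥0) := ⟨fun p => nndist (Φ i p.1) (Φ i p.2), by fun_prop⟩
  simp only [edist_nndist]
  refine exists_map_eq_lintegral_iSup_le (c := c) hΦ μ ν fun i f g hfg => ?_
  obtain ⟨φ, hφ, hf, hg⟩ := exists_dist_le_dist_of_add_le (Φ := Φ i) hfg
  lift φ to C(K, ℝ) using continuous_of_dist_le_dist (Φ i).continuous hφ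
  have hfμ : ∫ x, f x ∂μ ≤ ∫ x, φ x ∂μ :=
    integral_mono (integrable_continuousMap μ f) (integrable_continuousMap μ φ) hf
  have hgν : ∫ x, φ x ∂ν ≤ -∫ x, g x ∂ν := by
    rw [← integral_neg]
    exact integral_mono (integrable_continuousMap ν φ) (integrable_continuousMap ν g).neg hg
  linarith [hL i φ hφ]

lemma monotone_nndist_restrict {ι : Type*} {E : ι → Type*} [∀ i, PseudoMetricSpace (E i)]
    (a b : ∀ i, E i) : Monotone fun F : Finset ι => nndist (F.restrict a) (F.restrict b) :=
  fun _ G hFG => nndist_pi_le_iff.2 fun i =>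
    nndist_le_pi_nndist (G.restrict a) (G.restrict b) ⟨i, hFG i.2⟩

lemma iSup_edist_restrict {ι : Type*} {E : ι → Type*} [∀ i, PseudoEMetricSpace (E i)]
    (a b : ∀ i, E i) :
    ⨆ F : Finset ι, edist (F.restrict a) (F.restrict b) = ⨆ i, edist (a i) (b i) := by
  refine le_antisymm (iSup_le fun F => edist_pi_le_iff.2 fun i => ?_) (iSup_le fun i => ?_)
  · exact le_iSup (fun i => edist (a i) (b i)) i
  · exact le_iSup_of_le {i} <| edist_le_pi_edist (Finset.restrict {i} a) (Finset.restrict {i} b)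
      ⟨i, Finset.mem_singleton_self i⟩

lemma mem_LipCE_of_dist_le_dist_restrict {S ι : Type*} [TopologicalSpace S] {u : ι → S → ℝ}
    (hu : ∀ i, Continuous (u i)) (F : Finset ι) {φ : S → ℝ} (hbdd : ∃ M, ∀ x, |φ x| ≤ M)
    (hφ : ∀ x y, dist (φ x) (φ y) ≤ dist (F.restrict fun i => u i x) (F.restrict fun i => u i y)) :
    φ ∈ LipCE fun x y => ⨆ i, edist (u i x) (u i y) := by
  refine mem_LipCE.2 ⟨continuous_of_dist_le_dist (by fun_prop) hφ, hbdd, fun x y => ?_⟩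
  rw [← iSup_edist_restrict]
  refine le_iSup_of_le F ?_
  simpa only [edist_dist] using ENNReal.ofReal_le_ofReal (hφ x y)

section StandardBorel

variable {S ι : Type*} [MeasurableSpace S] [StandardBorelSpace S]

lemma exists_measurableEmbedding_pi_Icc [Countable ι] {a b : ι → ℝ} {u : ι → S → ℝ}
    (hu : ∀ i, Measurable (u i)) (hab : ∀ i x, u i x ∈ Icc (a i) (b i)) :
    ∃ j : S → (∀ i, Icc (a i) (b i)) × (ℕ → Bool),
      MeasurableEmbedding j ∧ ∀ i x, (j x).1 i = u i x := by
  -- The second coordinate only serves to make `j` injective; it need not be continuous.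
  let j (x : S) : (∀ i, Icc (a i) (b i)) × (ℕ → Bool) :=
    (fun i => ⟨u i x, hab i x⟩, MeasurableSpace.mapNatBool S x)
  have hmeas : Measurable j := (measurable_pi_lambda _ fun i => (hu i).subtype_mk).prodMk
    (MeasurableSpace.measurable_mapNatBool S)
  have hinj : Injective j := fun x y hxy =>
    MeasurableSpace.injective_mapNatBool S (congr_arg Prod.snd hxy)
  exact ⟨j, hmeas.measurableEmbedding hinj, fun _ _ => rfl⟩

variable [TopologicalSpace S] [OpensMeasurableSpace S]

theorem exists_mem_couplings_lintegral_iSup_edist_le [Countable ι]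
    {u : ι → S → ℝ} (hu : ∀ i, Continuous (u i)) (hbdd : ∀ i, ∃ M, ∀ x, |u i x| ≤ M)
    (μ ν : Measure S) [IsProbabilityMeasure μ] [IsProbabilityMeasure ν] {L : ℝ≥0}
    (hL : ∀ φ ∈ LipCE fun x y => ⨆ i, edist (u i x) (u i y), ∫ x, φ x ∂μ - ∫ x, φ x ∂ν ≤ L) :
    ∃ π ∈ Couplings μ ν, ∫⁻ p, ⨆ i, edist (u i p.1) (u i p.2) ∂π ≤ L := by
  choose M hM using hbdd
  obtain ⟨j, hj, hju⟩ := exists_measurableEmbedding_pi_Icc (fun i => (hu i).measurable)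
    fun i x => abs_le.1 (hM i x)
  have := Measure.isProbabilityMeasure_map (μ := μ) hj.measurable.aemeasurable
  have := Measure.isProbabilityMeasure_map (μ := ν) hj.measurable.aemeasurable
  let Φ (F : Finset ι) : C((∀ i, Icc (-M i) (M i)) × (ℕ → Bool), F → ℝ) :=
    ⟨fun k => F.restrict fun i => (k.1 i : ℝ), by fun_prop⟩
  have hΦj (F : Finset ι) (x : S) : Φ F (j x) = F.restrict fun i => u i x := by
    ext i
    exact hju i x
  have hΦ_mono : Monotone fun F (p : _ × _) => nndist (Φ F p.1) (Φ F p.2) :=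
    fun _ _ hFG p => monotone_nndist_restrict (fun i => (p.1.1 i : ℝ)) (fun i => p.2.1 i) hFG
  obtain ⟨π', hfst, hsnd, hcost⟩ := exists_map_eq_lintegral_iSup_edist_le Φ hΦ_mono.directed_le
    (μ.map j) (ν.map j) (L := L) fun F φ hφ => by
      have hφj (x y : S) : dist (φ (j x)) (φ (j y)) ≤
          dist (F.restrict fun i => u i x) (F.restrict fun i => u i y) := by
        simpa only [hΦj] using hφ (j x) (j y)
      rw [hj.integral_map, hj.integral_map]
      exact hL _ (mem_LipCE_of_dist_le_dist_restrict hu F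
        ⟨‖φ‖, fun x => φ.norm_coe_le_norm (j x)⟩ hφj)
  obtain ⟨π, rfl, rfl, rfl⟩ := exists_map_prodMap_eq hj hj hfst hsnd
  refine ⟨π, ⟨Measure.isProbabilityMeasure_of_map Prod.fst, rfl, rfl⟩, ?_⟩
  rw [(hj.prodMap hj).lintegral_map] at hcost
  simpa only [Prod.map_apply', hΦj, iSup_edist_restrict] using hcost

lemma iInf_couplings_le_iSup_edist_integral [HereditarilyLindelofSpace (S × S)] {c : S → S → ℝ≥0∞}
    (hc : ∀ x y, c x y = ⨆ u ∈ LipCE c, edist (u x) (u y)) (μ ν : Measure S)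
    [IsProbabilityMeasure μ] [IsProbabilityMeasure ν] :
    ⨅ π ∈ Couplings μ ν, ∫⁻ p, c p.1 p.2 ∂π ≤
      ⨆ u ∈ LipCE c, edist (∫ x, u x ∂μ) (∫ x, u x ∂ν) := by
  obtain ⟨A, hA, hcount, hAc⟩ := exists_countable_subset_LipCE hc
  have := hcount.to_subtype
  have hLip (u : A) := mem_LipCE.1 (hA u.2)
  refine le_of_forall_ge fun L hL => ?_
  induction L with
  | top => exact le_top
  | coe L =>
    obtain ⟨π, hπ, hcost⟩ := exists_mem_couplings_lintegral_iSup_edist_le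
      (fun u => (hLip u).1) (fun u => (hLip u).2.1) μ ν (L := L) fun φ hφ => by
        simp only [← hAc] at hφ
        have hdist : dist (∫ x, φ x ∂μ) (∫ x, φ x ∂ν) ≤ L :=
          edist_le_coe.1 ((le_iSup₂_of_le φ hφ le_rfl).trans hL)
        exact (le_abs_self _).trans hdist
    simp only [← hAc] at hcost
    exact (iInf₂_le π hπ).trans hcost

end StandardBorel

theorem KR_duality_iff_star_general
    {S : Type*} [TopologicalSpace S] [HereditarilyLindelofSpace (S × S)] [MeasurableSpace S]
    [OpensMeasurableSpace S] [StandardBorelSpace S] (c : S → S → ℝ≥0∞) :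
    (∀ μ ν : Measure S, IsProbabilityMeasure μ → IsProbabilityMeasure ν →
      (⨅ π ∈ Couplings μ ν, ∫⁻ p, c p.1 p.2 ∂π) =
        ⨆ u ∈ LipCE c, ENNReal.ofReal |∫ x, u x ∂μ - ∫ x, u x ∂ν|) ↔
    (∀ x y, c x y = ⨆ u ∈ LipCE c, ENNReal.ofReal |u x - u y|) := by
  simp only [← Real.dist_eq, ← edist_dist]
  refine ⟨fun h x y => ?_, fun hstar μ ν _ _ => le_antisymm ?_ ?_⟩
  · simpa only [iInf_couplings_dirac, integral_dirac] using
      h (.dirac x) (.dirac y) inferInstance inferInstance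
  · exact iInf_couplings_le_iSup_edist_integral hstar μ ν
  · exact iSup₂_le fun u hu => le_iInf₂ fun π hπ => edist_integral_le_lintegral hu hπ

/-- **Kantorovich–Rubinštein duality theorem**: for a Borel measurable cost
`c : S × S → [0,∞]`, the equality `KR_c(μ,ν) = ℓ_c(μ,ν)` holds for all pairs of Borel
probability measures if and only if `c` satisfies condition (★):
`c x y = sup_{u ∈ Lip_c} |u x - u y|`. -/
theorem KR_duality_iff_star
    {S : Type*} [TopologicalSpace S] [PolishSpace S] [MeasurableSpace S] [BorelSpace S]
    (c : S → S → ℝ≥0∞) (hc : Measurable (Function.uncurry c)) :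
    (∀ μ ν : Measure S, IsProbabilityMeasure μ → IsProbabilityMeasure ν →
      (⨅ π ∈ Couplings μ ν, ∫⁻ p, c p.1 p.2 ∂π) =
        ⨆ u ∈ LipCE c, ENNReal.ofReal |∫ x, u x ∂μ - ∫ x, u x ∂ν|) ↔
    (∀ x y, c x y = ⨆ u ∈ LipCE c, ENNReal.ofReal |u x - u y|) :=
  KR_duality_iff_star_general c

end
end
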